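/- arXiv:1812.05301 — 3 statements merged into one kernel-verified Lean document; each statement's English description precedes it below -/
import Mathlib

section
/- Let n ≥ 3. For every z ∈ ℂⁿ \ {0} the ℂ-linear map v ↦ v ⊙ z − ((v·z)/n) I_n is injective on ℂⁿ. That is, the deviatoric symmetrised gradient operator E_D u := e(u) − (div u / n) I_n is ℂ-elliptic in every dimension n ≥ 3. -/
/-!
Write `w` for the difference of two vectors with the same image and `c = (w·z)/n`. Comparing
entries, `w i * z i = c` for all `i`, and `w i * z j + w j * z i = 0` for `i ≠ j`. Multiplying the
second relation by `z i * z j` gives `c * (z i ^ 2 + z j ^ 2) = 0`. If `c ≠ 0`, then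
`z i ^ 2 + z j ^ 2 = 0` for all `i ≠ j`, and three distinct indices force `z i = 0` for each of
them, so `c = 0`, a contradiction. Hence `c = 0`; choosing `k` with `z k ≠ 0` gives `w k = 0`, and
then `w j * z k = 0` for every `j`, so `w = 0`. (For `n = 2` the first step fails at `z = (1, I)`.)
-/

/-- The kernel of the symbol is trivial, in terms of matrix entries: `c` stands for the common value
of the diagonal entries of `w ⊙ z`. -/
theorem eq_zero_of_symbol_entries (n : ℕ) (hn : 3 ≤ n) (z w : Fin n → ℂ) (hz : z ≠ 0) (c : ℂ)
    (hd : ∀ i, w i * z i = c) (ho : ∀ i j, i ≠ j → w i * z j + w j * z i = 0) : w = 0 := by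
  have hsq : ∀ i j, i ≠ j → c * (z i ^ 2 + z j ^ 2) = 0 := by
    intro i j hij
    linear_combination z i * z j * ho i j hij - z j ^ 2 * hd i - z i ^ 2 * hd j
  have hc : c = 0 := by
    by_contra hc
    have h01 := hsq ⟨0, by omega⟩ ⟨1, by omega⟩ (by simp)
    have h02 := hsq ⟨0, by omega⟩ ⟨2, by omega⟩ (by simp)
    have h12 := hsq ⟨1, by omega⟩ ⟨2, by omega⟩ (by simp)
    have h0 : c * z ⟨0, by omega⟩ ^ 2 = 0 := by
      linear_combination (h01 + h02 - h12) / 2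
    have hz0 : z ⟨0, by omega⟩ = 0 := by simpa [hc] using h0
    exact hc (by rw [← hd ⟨0, by omega⟩, hz0, mul_zero])
  obtain ⟨k, hk⟩ := Function.ne_iff.mp hz
  have hk' : z k ≠ 0 := hk
  have hwk : w k = 0 := by simpa [hc, hk'] using hd k
  funext j
  by_cases hjk : j = k
  · rw [hjk, hwk, Pi.zero_apply]
  · simpa [hwk, hk'] using ho j k hjk

/-- for `n ≥ 3` the deviatoric symmetrised gradient operator `E_D` is ℂ-elliptic:
for every `z ∈ ℂⁿ \ {0}` the ℂ-linear symbol map `v ↦ v ⊙ z − ((v·z)/n) Iₙ` is injective. -/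
theorem statement1 (n : ℕ) (hn : 3 ≤ n) (z : Fin n → ℂ) (hz : z ≠ 0) :
    Function.Injective (fun v : Fin n → ℂ =>
      (Matrix.of fun i j => (v i * z j + v j * z i) / 2)
        - ((∑ i, v i * z i) / (n : ℂ)) • (1 : Matrix (Fin n) (Fin n) ℂ)) := by
  intro u v huv
  have he := fun i j => congrFun (congrFun huv i) j
  refine sub_eq_zero.mp (eq_zero_of_symbol_entries n hn z (u - v) hz
    ((∑ i, u i * z i) / (n : ℂ) - (∑ i, v i * z i) / (n : ℂ)) ?_ ?_)
  · intro i
    have h := he i i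
    simp only [Matrix.sub_apply, Matrix.of_apply, Matrix.smul_apply, Matrix.one_apply_eq,
      smul_eq_mul] at h
    simp only [Pi.sub_apply]
    linear_combination h
  · intro i j hij
    have h := he i j
    simp only [Matrix.sub_apply, Matrix.of_apply, Matrix.smul_apply, Matrix.one_apply_ne hij,
      smul_eq_mul] at h
    simp only [Pi.sub_apply]
    linear_combination 2 * h
end

section
/- In dimension n = 2 the deviatoric symmetrised gradient E_D is ℝ-elliptic but not ℂ-elliptic. Precisely: (i) for every z ∈ ℝ² \ {0} and v ∈ ℝ², if v ⊙ z = ((v·z)/2) I₂ then v = 0; (ii) there exist nonzero v, z ∈ ℂ² with v ⊙ z = ((v·z)/2) I₂ (for instance v = (1, i) and z = (1, −i)). -/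
/-!
For `n = 2` the symbol equation `v ⊙ z = ((v·z)/2) I₂` says exactly that `v₀z₀ = v₁z₁` and
`v₀z₁ + v₁z₀ = 0`. As a linear system in `v` it has determinant `z₀² + z₁²`, which vanishes over
`ℝ` only at `z = 0`, but vanishes over `ℂ` at the isotropic vector `z = (1, -i)`, where
`v = (1, i)` lies in the kernel.
-/

/-- in dimension `n = 2` the deviatoric symmetrised gradient `E_D` is
ℝ-elliptic but not ℂ-elliptic: (i) for every `z ∈ ℝ² \ {0}` and `v ∈ ℝ²`, if
`v ⊙ z = ((v·z)/2) I₂` then `v = 0`; (ii) there exist nonzero `v, z ∈ ℂ²` with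
`v ⊙ z = ((v·z)/2) I₂`. -/
theorem statement2 :
    (∀ z : Fin 2 → ℝ, z ≠ 0 → ∀ v : Fin 2 → ℝ,
      (Matrix.of fun i j => (v i * z j + v j * z i) / 2)
          = ((∑ i, v i * z i) / 2) • (1 : Matrix (Fin 2) (Fin 2) ℝ) → v = 0) ∧
    (∃ v z : Fin 2 → ℂ, v ≠ 0 ∧ z ≠ 0 ∧
      (Matrix.of fun i j => (v i * z j + v j * z i) / 2)
          = ((∑ i, v i * z i) / 2) • (1 : Matrix (Fin 2) (Fin 2) ℂ)) := by
  refine ⟨fun z hz v h => ?_, ![1, Complex.I], ![1, -Complex.I], ?_, ?_, ?_⟩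
  · have h00 := congrFun (congrFun h 0) 0
    have h01 := congrFun (congrFun h 0) 1
    simp [Fin.sum_univ_two] at h00 h01
    have hdiag : v 0 * z 0 = v 1 * z 1 := by linarith
    have hoff : v 0 * z 1 + v 1 * z 0 = 0 := by linarith
    have hdet : z 0 ^ 2 + z 1 ^ 2 ≠ 0 := by
      intro h0
      apply hz
      ext i
      fin_cases i
      · show z 0 = 0
        nlinarith [sq_nonneg (z 0), sq_nonneg (z 1)]
      · show z 1 = 0
        nlinarith [sq_nonneg (z 0), sq_nonneg (z 1)]
    -- Cramer's rule for the system `hdiag`, `hoff` in the unknown `v`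
    have hv0 : v 0 * (z 0 ^ 2 + z 1 ^ 2) = 0 := by
      linear_combination z 0 * hdiag + z 1 * hoff
    have hv1 : v 1 * (z 0 ^ 2 + z 1 ^ 2) = 0 := by
      linear_combination -z 1 * hdiag + z 0 * hoff
    ext i
    fin_cases i
    · exact (mul_eq_zero.mp hv0).resolve_right hdet
    · exact (mul_eq_zero.mp hv1).resolve_right hdet
  · intro h
    simpa using congrFun h 0
  · intro h
    simpa using congrFun h 0
  · ext i j
    fin_cases i <;> fin_cases j <;> simp [Fin.sum_univ_two]
end

section
/- Let n ≥ 2, let U ⊂ ℝⁿ be open, bounded and star-shaped with respect to a ball (star-shaped with respect to each point of some ball contained in U), and assume the operator 𝔸 is ℂ-elliptic. Then there exists a constant C > 0 such that ‖v‖_{L^{n/(n−1)}(U;ℝⁿ)} ≤ C ‖𝔸v‖_{L¹(U;M_sym)} for every v ∈ C¹_c(U;ℝⁿ) (continuously differentiable with compact support in U). -/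
/-!
The proof reduces the inequality to one about potentials of positive measures. Let `n` be the
dimension, `p = n / (n - 1)`, and let `μ` be the measure `|𝔸v| dx`, where `|𝔸v|` is a sum of absolute
values of entries. Both integrals may be taken over all of `ℝⁿ`, since `v` is supported in `U`.

**Pointwise bounds on one-sided cones.** By ℂ-ellipticity the complexified symbol is injective off
the origin, so by Hilbert's Nullstellensatz some power of the ideal `(X₁, …, Xₙ)` is carried by the
symbol: for `P` in it, `P • 1` is a polynomial left multiple of the symbol matrix
(`nullstellensatz_symbol`). Hence high order derivatives of a test function, paired with `v`, are
pairings of test functions with `𝔸v` (`exists_dual`). Fix a compact set `S` with nonempty interior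
and `0 ∉ S`. Averaging `v(0) = -∫₀^∞ ∇v(sy) y ds` against a test function `ρ` on `S` with integral
`1`, and integrating by parts, leaves the pairing of `v` with `div (y ρ)`. The commutation relation
between `φ ↦ div (y φ)` and the partial derivatives lets one choose `ρ` such that `div (y ρ)` is a sum
of derivatives of high order of functions supported in `S` (`exists_test_with_derivSpan`). This
bounds `|v(x)|` by `∫₀^∞ ∫_S |𝔸v(x + sy)| dy ds` (`pointwise_bound`). Taking for `S` a small ball around
`±eᵢ`, one gets, for every coordinate direction and both signs, `|v(x)| ≤ C F_{i,±}(x)`, where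
`F_{i,±}` is the potential of `μ` for the Riesz kernel `|w|^{1-n}` cut off to a cone around `±eᵢ`
(`exists_pointwise_const`).

**Opposite cones.** The full potential `F` fails to be in `L^p` for general `μ`, but a function
bounded by all of the `F_{i,±}` is better. The cones cover space, so `F ≤ Σᵢ (F_{i,+} + F_{i,-})`, and
elementary estimates give `|v|^p ≤ C Σᵢ F_{i,+} F_{i,-} F^{-q}` with `q = 2 - p = (n - 2) / (n - 1)`
(`rpow_le_sum_of_opposite`). If `y` and `z` lie in opposite cones with apex `x`, then
`|y - x| + |z - x| ≤ 2 |y - z|`, hence `F(x) ≥ c |y - z|^{1-n} μ(B(y, |y - z|))`. Expand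
`F_{i,+} F_{i,-}` as a double integral over `(y, z)` and integrate in `x` first: the two kernels
contribute at most `C |y - z|^{2-n}`, the factor `F^{-q}` contributes
`C |y - z|^{n-2} μ(B(y, |y - z|))^{-q}`, and the powers of `|y - z|` cancel
(`lintegral_cone_pair_le`). What remains is `∫ μ(B(y, |y - z|))^{-q} dμ(z)`, which is at most
`C μ(ℝⁿ)^{1-q}` because `q < 1` (`energy_bound`). The total is `C μ(ℝⁿ)^{2-q} = C ‖𝔸v‖₁^p`
(`potential_estimate`).

Norms on `ℝⁿ` are sup norms throughout; the Euclidean and Frobenius norms of the statement enter only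
in the last part.
-/

open MeasureTheory

noncomputable section

/-- The Frobenius norm of an `n × n` array. -/
def frobNorm {n : ℕ} (M : Fin n → Fin n → ℝ) : ℝ := Real.sqrt (∑ i, ∑ j, (M i j) ^ 2)

/-- The Euclidean norm of a vector in `ℝⁿ`. -/
def vecNorm {n : ℕ} (v : Fin n → ℝ) : ℝ := Real.sqrt (∑ i, (v i) ^ 2)

/-- The differential operator `𝔸 u (x) = ∑ j, A_j (∂_j u (x))`. -/
def Aop (n : ℕ) (A : Fin n → ((Fin n → ℝ) →ₗ[ℝ] (Fin n → Fin n → ℝ)))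
    (u : (Fin n → ℝ) → (Fin n → ℝ)) (x : Fin n → ℝ) : Fin n → Fin n → ℝ :=
  ∑ j, A j (fderiv ℝ u x (Pi.single j 1))

/-- ℂ-ellipticity of `𝔸`: the complexified symbol `v ↦ ∑ j, z_j A_j^ℂ v` is injective for
every `z ∈ ℂⁿ \ {0}`. -/
def CElliptic (n : ℕ) (A : Fin n → ((Fin n → ℝ) →ₗ[ℝ] (Fin n → Fin n → ℝ))) : Prop :=
  ∀ z : Fin n → ℂ, z ≠ 0 → ∀ v : Fin n → ℂ,
    (∀ k l, (∑ j, z j * ((A j (fun i => (v i).re) k l : ℂ)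
        + Complex.I * (A j (fun i => (v i).im) k l : ℂ))) = 0) → v = 0

/-- `U` is star-shaped with respect to (each point of) a ball contained in it. -/
def StarShapedWrtBall (n : ℕ) (U : Set (Fin n → ℝ)) : Prop :=
  ∃ x₀ : Fin n → ℝ, ∃ r : ℝ, 0 < r ∧ Metric.ball x₀ r ⊆ U ∧
    ∀ c ∈ Metric.ball x₀ r, StarConvex ℝ c U

open scoped ContDiff

/-! ### The Nullstellensatz for the symbol -/

section
open MvPolynomial

open scoped IsMulCommutative in
/-- A commuting family in a noncommutative algebra can be substituted into polynomials: it generates a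
commutative subalgebra. -/
lemma exists_aeval_of_commute {R B σ : Type*} [CommRing R] [Ring B] [Algebra R B] (D : σ → B)
    (hD : ∀ i j, D i * D j = D j * D i) :
    ∃ P : MvPolynomial σ R →ₐ[R] B, ∀ j, P (X j) = D j := by
  have := Algebra.isMulCommutative_adjoin R (s := Set.range D) (by
    rintro _ ⟨i, rfl⟩ _ ⟨j, rfl⟩; exact hD i j)
  refine ⟨(Algebra.adjoin R (Set.range D)).val.comp
    (aeval fun j => (⟨D j, Algebra.subset_adjoin ⟨j, rfl⟩⟩ : Algebra.adjoin R (Set.range D))), ?_⟩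
  intro j
  simp

lemma exists_leftInverse {N : Type*} [Fintype N] {n : ℕ} (M : Matrix N (Fin n) ℂ)
    (h : ∀ v, M.mulVec v = 0 → v = 0) : ∃ G : Matrix (Fin n) N ℂ, G * M = 1 := by
  classical
  obtain ⟨g, hg⟩ := LinearMap.exists_leftInverse_of_injective (Matrix.toLin' M)
    (by rw [LinearMap.ker_eq_bot']; intro v hv; exact h v (by simpa using hv))
  refine ⟨LinearMap.toMatrix' g, ?_⟩
  have := congrArg LinearMap.toMatrix' hg
  rw [LinearMap.toMatrix'_comp, LinearMap.toMatrix'_toLin', LinearMap.toMatrix'_id] at this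
  exact this

/-- Let `S` be the polynomial matrix `∑ j, X j * a j`. If `S` is injective at every nonzero complex
point, then for some `k` every `p ∈ (X₁, …, Xₙ) ^ k` satisfies `B * S = p • 1` for some polynomial
matrix `B`, whose row `i` is the `b` of the conclusion. The ideal of all such `p` has no zero other
than possibly the origin, so its radical contains every `X j`. -/
lemma nullstellensatz_symbol {N : Type*} [Fintype N] {n : ℕ}
    (a : Fin n → N → Fin n → ℂ)
    (ha : ∀ z : Fin n → ℂ, z ≠ 0 → ∀ w : Fin n → ℂ,
      (∀ q, ∑ i, (∑ j, z j * a j q i) * w i = 0) → w = 0) :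
    ∃ k : ℕ, ∀ p ∈ (Ideal.span (Set.range (X : Fin n → MvPolynomial (Fin n) ℂ))) ^ k,
      ∀ i, ∃ b : N → MvPolynomial (Fin n) ℂ, ∀ l,
        ∑ q, b q * (∑ j, X j * C (a j q l)) = if l = i then p else 0 := by
  classical
  let S : Matrix N (Fin n) (MvPolynomial (Fin n) ℂ) := fun q l => ∑ j, X j * C (a j q l)
  let I : Ideal (MvPolynomial (Fin n) ℂ) :=
    { carrier := {p | ∃ B : Matrix (Fin n) N (MvPolynomial (Fin n) ℂ), B * S = p • 1}
      add_mem' := by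
        rintro p r ⟨B, hB⟩ ⟨B', hB'⟩
        exact ⟨B + B', by rw [Matrix.add_mul, hB, hB', add_smul]⟩
      zero_mem' := ⟨0, by simp⟩
      smul_mem' := by
        rintro c p ⟨B, hB⟩
        exact ⟨c • B, by rw [Matrix.smul_mul, hB, smul_smul]; rfl⟩ }
  have hrad : Ideal.span (Set.range (X : Fin n → MvPolynomial (Fin n) ℂ)) ≤ I.radical := by
    rw [← vanishingIdeal_zeroLocus_eq_radical (K := ℂ), Ideal.span_le]
    rintro _ ⟨j, rfl⟩
    rw [SetLike.mem_coe, mem_vanishingIdeal_iff]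
    intro z hz
    by_cases hz0 : z = 0
    · simp [hz0]
    exfalso
    let Mz : Matrix N (Fin n) ℂ := fun q l => ∑ j, z j * a j q l
    obtain ⟨G, hG⟩ := exists_leftInverse Mz (fun w hw => ha z hz0 w fun q => by
      simpa [Matrix.mulVec, dotProduct, Mz] using congrFun hw q)
    let GC : Matrix (Fin n) N (MvPolynomial (Fin n) ℂ) := fun i q => C (G i q)
    -- Cramer's rule puts `det (GC * S)` in `I`; its value at `z` is `det (G * Mz) = 1`
    have hmem : (GC * S).det ∈ I :=
      ⟨(GC * S).adjugate * GC, by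
        rw [Matrix.mul_assoc, Matrix.adjugate_mul]⟩
    have h0 := hz _ hmem
    have hmap : (aeval z : MvPolynomial (Fin n) ℂ →ₐ[ℂ] ℂ).toRingHom.mapMatrix (GC * S)
        = G * Mz := by
      ext i l
      have hS : ∀ q l, S q l = ∑ j, X j * C (a j q l) := fun _ _ => rfl
      have hM : ∀ q l, Mz q l = ∑ j, z j * a j q l := fun _ _ => rfl
      have hGC : ∀ i q, GC i q = C (G i q) := fun _ _ => rfl
      simp [Matrix.mul_apply, hS, hM, hGC]
    have h1 : (aeval z : MvPolynomial (Fin n) ℂ →ₐ[ℂ] ℂ).toRingHom (GC * S).det = 1 := by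
      rw [RingHom.map_det, hmap, hG, Matrix.det_one]
    have h2 : (aeval z : MvPolynomial (Fin n) ℂ →ₐ[ℂ] ℂ) (GC * S).det = 1 := h1
    rw [h0] at h2
    exact zero_ne_one h2
  obtain ⟨k, hk⟩ := Ideal.exists_pow_le_of_le_radical_of_fg hrad (IsNoetherian.noetherian _)
  refine ⟨k, fun p hp i => ?_⟩
  obtain ⟨B, hB⟩ := hk hp
  refine ⟨B i, fun l => ?_⟩
  have := congrFun (congrFun hB i) l
  rw [Matrix.mul_apply] at this
  rw [this]
  simp [Matrix.one_apply, eq_comm]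
end

/-! ### Test functions supported in a compact set -/

/-- The space of smooth complex functions on `ℝⁿ` vanishing off `S`. The scalars are complex since the
Nullstellensatz is applied over `ℂ`. -/
def TestFn {n : ℕ} (S : Set (Fin n → ℝ)) : Submodule ℂ ((Fin n → ℝ) → ℂ) where
  carrier := {φ | ContDiff ℝ ∞ φ ∧ Function.support φ ⊆ S}
  add_mem' := fun ha hb => ⟨ha.1.add hb.1,
    (Function.support_add _ _).trans (Set.union_subset ha.2 hb.2)⟩
  zero_mem' := ⟨contDiff_const, by simp⟩
  smul_mem' := fun c _ h => ⟨h.1.const_smul c, (Function.support_const_smul_subset c _).trans h.2⟩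

section
variable {n : ℕ} {S : Set (Fin n → ℝ)}

lemma testFn_tsupport_subset (hS : IsClosed S) (φ : TestFn S) :
    tsupport (φ : (Fin n → ℝ) → ℂ) ⊆ S :=
  closure_minimal φ.2.2 hS

lemma testFn_hasCompactSupport (hS : IsCompact S) (φ : TestFn S) :
    HasCompactSupport (φ : (Fin n → ℝ) → ℂ) :=
  hS.of_isClosed_subset (isClosed_tsupport _) (testFn_tsupport_subset hS.isClosed φ)

lemma testFn_differentiable (φ : TestFn S) : Differentiable ℝ (φ : (Fin n → ℝ) → ℂ) :=
  φ.2.1.differentiable (by simp)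

lemma testFn_continuous (φ : TestFn S) : Continuous (φ : (Fin n → ℝ) → ℂ) :=
  φ.2.1.continuous

/-- The partial derivative `∂ⱼ` as an endomorphism of `TestFn S`; closedness of `S` keeps the support
in `S`. -/
def testD (hS : IsClosed S) (j : Fin n) : Module.End ℂ (TestFn S) where
  toFun φ := ⟨fun x => fderiv ℝ φ.1 x (Pi.single j 1),
    (φ.2.1.fderiv_right (m := ∞) (by simp)).clm_apply contDiff_const, by
      intro x hx
      refine testFn_tsupport_subset hS φ (support_fderiv_subset ℝ ?_)
      intro h0
      exact hx (by simp [h0])⟩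
  map_add' φ ψ := by
    ext x
    simp [fderiv_add (testFn_differentiable φ x) (testFn_differentiable ψ x)]
  map_smul' c φ := by
    ext x
    simp [fderiv_const_smul (testFn_differentiable φ x)]

/-- Multiplication by the `j`-th coordinate as an endomorphism of `TestFn S`. -/
def testY (S : Set (Fin n → ℝ)) (j : Fin n) : Module.End ℂ (TestFn S) where
  toFun φ := ⟨fun x => (x j : ℂ) * φ.1 x,
    (Complex.ofRealCLM.contDiff.comp (contDiff_apply ℝ ℝ j)).mul φ.2.1,
    (Function.support_mul_subset_right _ _).trans φ.2.2⟩
  map_add' φ ψ := by ext x; simp [mul_add]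
  map_smul' c φ := by ext x; simp; ring

lemma testD_apply (hS : IsClosed S) (j : Fin n) (φ : TestFn S) (x : Fin n → ℝ) :
    (testD hS j φ : (Fin n → ℝ) → ℂ) x = fderiv ℝ φ.1 x (Pi.single j 1) := rfl

lemma testY_apply (j : Fin n) (φ : TestFn S) (x : Fin n → ℝ) :
    (testY S j φ : (Fin n → ℝ) → ℂ) x = (x j : ℂ) * φ.1 x := rfl

lemma testD_comm (hS : IsClosed S) (i j : Fin n) :
    testD hS i * testD hS j = testD hS j * testD hS i := by
  ext φ x
  have h2 : ∀ k : Fin n, ∀ w, fderiv ℝ (fun x => fderiv ℝ φ.1 x (Pi.single k 1)) x w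
      = fderiv ℝ (fderiv ℝ φ.1) x w (Pi.single k 1) := by
    intro k w
    have hd : DifferentiableAt ℝ (fderiv ℝ φ.1) x :=
      ((φ.2.1.fderiv_right (m := ∞) (by simp)).differentiable (by simp)) x
    rw [fderiv_clm_apply hd (differentiableAt_const _)]
    simp
  have hsymm : IsSymmSndFDerivAt ℝ φ.1 x :=
    (φ.2.1.contDiffAt).isSymmSndFDerivAt (by simp; exact WithTop.coe_le_coe.2 le_top)
  change fderiv ℝ (fun x => fderiv ℝ φ.1 x (Pi.single j 1)) x (Pi.single i 1)
    = fderiv ℝ (fun x => fderiv ℝ φ.1 x (Pi.single i 1)) x (Pi.single j 1)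
  rw [h2, h2]
  exact hsymm _ _

lemma testD_mul_testY (hS : IsClosed S) (i j : Fin n) :
    testD hS i * testY S j = testY S j * testD hS i + (if i = j then 1 else 0) := by
  ext φ x
  have hc : HasFDerivAt (fun x : Fin n → ℝ => (x j : ℂ))
      (Complex.ofRealCLM.comp (ContinuousLinearMap.proj j)) x :=
    (Complex.ofRealCLM.comp (ContinuousLinearMap.proj (R := ℝ) (φ := fun _ : Fin n => ℝ) j)).hasFDerivAt
  have hm := (hc.mul (testFn_differentiable φ x).hasFDerivAt).fderiv
  have : (testD hS i (testY S j φ) : (Fin n → ℝ) → ℂ) x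
      = (x j : ℂ) * fderiv ℝ φ.1 x (Pi.single i 1) + φ.1 x * (if i = j then 1 else 0) := by
    rw [testD_apply]
    change fderiv ℝ (fun y => (y j : ℂ) * φ.1 y) x _ = _
    erw [hm]
    by_cases hij : i = j
    · simp [hij]
    · simp [hij, Ne.symm hij]
  change (testD hS i (testY S j φ) : (Fin n → ℝ) → ℂ) x = _
  rw [this]
  split_ifs <;> simp [testY_apply, testD_apply]

/-- The operator `T φ = div (y φ)`, where `y` denotes the position vector. -/
def testT (hS : IsClosed S) : Module.End ℂ (TestFn S) := ∑ j, testD hS j * testY S j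

/-- The relation `(T + 1) ∂ᵢ = ∂ᵢ T`, expressing that `∂ᵢ` is homogeneous of degree `-1`. -/
lemma testT_mul_testD (hS : IsClosed S) (i : Fin n) :
    (testT hS + 1) * testD hS i = testD hS i * testT hS := by
  have h : ∀ j, testD hS i * (testD hS j * testY S j) =
      testD hS j * testY S j * testD hS i + (if i = j then testD hS j else 0) := by
    intro j
    rw [← mul_assoc, testD_comm, mul_assoc, testD_mul_testY, mul_add, mul_assoc]
    split_ifs <;> simp
  rw [testT, Finset.mul_sum, Finset.sum_congr rfl fun j _ => h j, Finset.sum_add_distrib, add_mul,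
    Finset.sum_mul]
  simp

/-- The span of the `k`-fold partial derivatives of functions in `TestFn S`. -/
def derivSpan (hS : IsClosed S) : ℕ → Submodule ℂ (TestFn S)
  | 0 => ⊤
  | k + 1 => ⨆ j, (derivSpan hS k).map (testD hS j)

/-- `T + k` raises the order of a `k`-fold derivative by one. For `k = 0` this is the definition of `T`
as a divergence; the step is `(T + k + 1) ∂ⱼ = ∂ⱼ (T + k)`. -/
lemma testT_mem_derivSpan (hS : IsClosed S) (k : ℕ) :
    ∀ w ∈ derivSpan hS k, testT hS w + (k : ℂ) • w ∈ derivSpan hS (k + 1) := by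
  induction k with
  | zero =>
    intro w _
    simp only [CharP.cast_eq_zero, zero_smul, add_zero, testT, LinearMap.sum_apply]
    refine Submodule.sum_mem _ fun j _ => ?_
    exact Submodule.mem_iSup_of_mem j ⟨testY S j w, trivial, rfl⟩
  | succ k ih =>
    have hle : derivSpan hS (k + 1) ≤
        (derivSpan hS (k + 2)).comap (testT hS + ((k + 1 : ℕ) : ℂ) • (1 : Module.End ℂ (TestFn S))) := by
      conv_lhs => rw [derivSpan]
      refine iSup_le fun j => ?_
      rintro _ ⟨w, hw, rfl⟩
      have h1 := ih w hw
      have h2 := LinearMap.congr_fun (testT_mul_testD hS j) w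
      rw [Submodule.mem_comap]
      have h3 : (testT hS + ((k + 1 : ℕ) : ℂ) • (1 : Module.End ℂ (TestFn S))) (testD hS j w)
          = testD hS j (testT hS w + (k : ℂ) • w) := by
        simp only [Module.End.mul_apply, LinearMap.add_apply, Module.End.one_apply] at h2
        simp only [LinearMap.add_apply, LinearMap.smul_apply, Module.End.one_apply, map_add,
          map_smul, ← h2]
        push_cast
        module
      rw [h3]
      exact Submodule.mem_iSup_of_mem j ⟨_, h1, rfl⟩
    intro w hw
    exact hle hw

lemma integral_testD_mul (hS : IsCompact S) (j : Fin n) (φ : TestFn S) {g : (Fin n → ℝ) → ℂ}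
    (hg : ContDiff ℝ 1 g) :
    ∫ x, (testD hS.isClosed j φ).1 x * g x = - ∫ x, φ.1 x * fderiv ℝ g x (Pi.single j 1) := by
  have hgd : Continuous fun x => fderiv ℝ g x (Pi.single j 1) :=
    (hg.continuous_fderiv (by simp)).clm_apply continuous_const
  rw [integral_mul_fderiv_eq_neg_fderiv_mul_of_integrable (f := φ.1) (g := g)]
  · simp [testD_apply]
  · exact ((testFn_continuous (testD hS.isClosed j φ)).mul hg.continuous).integrable_of_hasCompactSupport
      (testFn_hasCompactSupport hS (testD hS.isClosed j φ)).mul_right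
  · exact ((testFn_continuous φ).mul hgd).integrable_of_hasCompactSupport
      (testFn_hasCompactSupport hS φ).mul_right
  · exact ((testFn_continuous φ).mul hg.continuous).integrable_of_hasCompactSupport
      (testFn_hasCompactSupport hS φ).mul_right
  · exact fun x _ => testFn_differentiable φ x
  · exact fun x _ => hg.differentiable (by simp) x

lemma integral_testT (hS : IsCompact S) (φ : TestFn S) :
    ∫ x, (testT hS.isClosed φ).1 x = 0 := by
  have h : ∀ j, ∫ x, (testD hS.isClosed j (testY S j φ)).1 x = 0 := by
    intro j
    have := integral_testD_mul hS j (testY S j φ) (g := fun _ => 1) contDiff_const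
    simpa using this
  have h2 : (testT hS.isClosed φ).1 = fun x => ∑ j, (testD hS.isClosed j (testY S j φ)).1 x := by
    ext x
    simp [testT]
  rw [h2, integral_finsetSum]
  · simp [h]
  · intro j _
    exact (testFn_continuous (testD hS.isClosed j (testY S j φ))).integrable_of_hasCompactSupport
      (testFn_hasCompactSupport hS (testD hS.isClosed j (testY S j φ)))

lemma testFn_integrable (hS : IsCompact S) (φ : TestFn S) : Integrable φ.1 :=
  (testFn_continuous φ).integrable_of_hasCompactSupport (testFn_hasCompactSupport hS φ)

/-- There is a test function `ρ` of integral `1` for which `T ρ` is a sum of derivatives of order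
`k + 1`. -/
lemma exists_test_with_derivSpan (hS : IsCompact S) (hne : (interior S).Nonempty) (k : ℕ) :
    ∃ ρ : TestFn S, ∫ x, ρ.1 x = 1 ∧ testT hS.isClosed ρ ∈ derivSpan hS.isClosed (k + 1) := by
  induction k with
  | zero =>
    obtain ⟨c, hc⟩ := hne
    obtain ⟨r, hr, hrS⟩ := Metric.isOpen_iff.1 isOpen_interior c hc
    let b : ContDiffBump c := ⟨r / 2, r, by positivity, by linarith⟩
    let ρ : TestFn S := ⟨fun x => ((b.normed volume x : ℝ) : ℂ),
      Complex.ofRealCLM.contDiff.comp b.contDiff_normed, by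
        intro x hx
        have : x ∈ Function.support (b.normed volume) := by
          intro h; exact hx (by simp [h])
        rw [b.support_normed_eq] at this
        exact interior_subset (hrS this)⟩
    refine ⟨ρ, ?_, ?_⟩
    · change ∫ x, ((b.normed volume x : ℝ) : ℂ) = 1
      rw [integral_complex_ofReal, b.integral_normed]
      simp
    · have := testT_mem_derivSpan hS.isClosed 0 ρ trivial
      simpa using this
  | succ k ih =>
    obtain ⟨ρ, h1, h2⟩ := ih
    -- `T (T ρ / (k + 1) + ρ) = (T + (k + 1)) (T ρ) / (k + 1)`, and `T ρ` has integral zero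
    have hk : ((k + 1 : ℕ) : ℂ) ≠ 0 := by exact_mod_cast Nat.succ_ne_zero k
    refine ⟨((k + 1 : ℕ) : ℂ)⁻¹ • testT hS.isClosed ρ + ρ, ?_, ?_⟩
    · have : (((k + 1 : ℕ) : ℂ)⁻¹ • testT hS.isClosed ρ + ρ).1
          = fun x => ((k + 1 : ℕ) : ℂ)⁻¹ * (testT hS.isClosed ρ).1 x + ρ.1 x := by
        ext x; simp
      rw [this, integral_add ((testFn_integrable hS (testT hS.isClosed ρ)).const_mul _)
        (testFn_integrable hS ρ), integral_const_mul, integral_testT hS, h1]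
      simp
    · have := (derivSpan hS.isClosed (k + 2)).smul_mem ((k + 1 : ℕ) : ℂ)⁻¹
        (testT_mem_derivSpan hS.isClosed (k + 1) _ h2)
      rw [smul_add, smul_smul, inv_mul_cancel₀ hk, one_smul] at this
      simpa using this

/-- The `k`-fold derivatives in terms of the algebra morphism `P : p ↦ p(∂₁, …, ∂ₙ)`: they are spanned
by the `P p η` with `p ∈ (X₁, …, Xₙ) ^ k`. -/
lemma derivSpan_le_span (hS : IsClosed S)
    (P : MvPolynomial (Fin n) ℂ →ₐ[ℂ] Module.End ℂ (TestFn S))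
    (hP : ∀ j, P (MvPolynomial.X j) = testD hS j) (k : ℕ) :
    derivSpan hS k ≤ Submodule.span ℂ {w | ∃ p ∈ (Ideal.span (Set.range
      (MvPolynomial.X : Fin n → MvPolynomial (Fin n) ℂ))) ^ k, ∃ η, w = P p η} := by
  induction k with
  | zero =>
    intro w _
    exact Submodule.subset_span ⟨1, by simp, w, by simp⟩
  | succ k ih =>
    rw [derivSpan]
    refine iSup_le fun j => (Submodule.map_mono ih).trans ?_
    rw [Submodule.map_span, Submodule.span_le]
    rintro _ ⟨_, ⟨p, hp, η, rfl⟩, rfl⟩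
    refine Submodule.subset_span ⟨MvPolynomial.X j * p, ?_, η, ?_⟩
    · rw [pow_succ']
      exact Ideal.mul_mem_mul (Ideal.subset_span ⟨j, rfl⟩) hp
    · rw [map_mul, hP]
      rfl

/-- The pairing `φ ↦ ∫ φ g` with a continuous function `g`. -/
def testPair (hS : IsCompact S) (g : (Fin n → ℝ) → ℂ) (hg : Continuous g) : TestFn S →ₗ[ℂ] ℂ where
  toFun φ := ∫ x, φ.1 x * g x
  map_add' φ ψ := by
    have h : ∀ φ : TestFn S, Integrable (fun x => φ.1 x * g x) := fun φ =>
      ((testFn_continuous φ).mul hg).integrable_of_hasCompactSupport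
        (testFn_hasCompactSupport hS φ).mul_right
    rw [← integral_add (h φ) (h ψ)]
    simp [add_mul]
  map_smul' c φ := by
    rw [RingHom.id_apply, smul_eq_mul, ← integral_const_mul]
    simp [mul_assoc]

lemma testPair_apply (hS : IsCompact S) (g : (Fin n → ℝ) → ℂ) (hg : Continuous g) (φ : TestFn S) :
    testPair hS g hg φ = ∫ x, φ.1 x * g x := rfl

/-- If `w` is a sum of derivatives of order `k`, where `(X₁, …, Xₙ) ^ k` is carried by the symbol, then
the pairing of `w` with `vᵢ` is a sum of pairings of test functions with the components of `𝔸v`.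
Indeed for `w = p(∂) η` and `b` as in the hypothesis one may take `ψ q = b q (∂) η`, by integration by
parts. -/
lemma exists_dual {N : Type*} [Fintype N] (hS : IsCompact S) (a : Fin n → N → Fin n → ℝ) (k : ℕ)
    (hk : ∀ p ∈ (Ideal.span (Set.range
        (MvPolynomial.X : Fin n → MvPolynomial (Fin n) ℂ))) ^ k,
      ∀ i, ∃ b : N → MvPolynomial (Fin n) ℂ, ∀ l,
        ∑ q, b q * (∑ j, MvPolynomial.X j * MvPolynomial.C (a j q l : ℂ)) = if l = i then p else 0)
    (w : TestFn S) (hw : w ∈ derivSpan hS.isClosed k) (i : Fin n) :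
    ∃ ψ : N → TestFn S, ∀ v : (Fin n → ℝ) → (Fin n → ℝ), ContDiff ℝ 1 v →
      ∫ x, w.1 x * (v x i : ℂ) = - ∑ q, ∫ x, (ψ q).1 x *
        ((∑ j, ∑ l, a j q l * fderiv ℝ v x (Pi.single j 1) l : ℝ) : ℂ) := by
  obtain ⟨P, hP⟩ := exists_aeval_of_commute (R := ℂ) (testD (S := S) hS.isClosed)
    (testD_comm hS.isClosed)
  have hw' := derivSpan_le_span hS.isClosed P hP k hw
  have hcd : ∀ v : (Fin n → ℝ) → (Fin n → ℝ), ContDiff ℝ 1 v → ∀ j l,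
      Continuous fun x => ((fderiv ℝ v x (Pi.single j 1) l : ℝ) : ℂ) := by
    intro v hv j l
    exact Complex.continuous_ofReal.comp ((continuous_apply l).comp
      ((hv.continuous_fderiv (by simp)).clm_apply continuous_const))
  have hcf : ∀ v : (Fin n → ℝ) → (Fin n → ℝ), ContDiff ℝ 1 v → ∀ q,
      Continuous fun x => ((∑ j, ∑ l, a j q l * fderiv ℝ v x (Pi.single j 1) l : ℝ) : ℂ) := by
    intro v hv q
    push_cast
    exact continuous_finsetSum _ fun j _ => continuous_finsetSum _ fun l _ =>
      continuous_const.mul (hcd v hv j l)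
  have hint : ∀ (φ : TestFn S) (g : (Fin n → ℝ) → ℂ), Continuous g →
      Integrable (fun x => φ.1 x * g x) := fun φ g hg =>
    ((testFn_continuous φ).mul hg).integrable_of_hasCompactSupport
      (testFn_hasCompactSupport hS φ).mul_right
  clear hw
  induction hw' using Submodule.span_induction with
  | mem w h =>
    obtain ⟨p, hp, η, rfl⟩ := h
    obtain ⟨b, hb⟩ := hk p hp i
    refine ⟨fun q => P (b q) η, fun v hv => ?_⟩
    have hvl : ∀ l, ContDiff ℝ 1 fun x => (v x l : ℂ) := fun l =>
      Complex.ofRealCLM.contDiff.comp ((contDiff_apply ℝ ℝ l).comp hv)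
    have hfd : ∀ l x j, fderiv ℝ (fun x => (v x l : ℂ)) x (Pi.single j 1)
        = ((fderiv ℝ v x (Pi.single j 1) l : ℝ) : ℂ) := by
      intro l x j
      have h1 : HasFDerivAt (fun x => (v x l : ℂ))
          ((Complex.ofRealCLM.comp (ContinuousLinearMap.proj (R := ℝ) (φ := fun _ : Fin n => ℝ) l)).comp
            (fderiv ℝ v x)) x :=
        (Complex.ofRealCLM.comp (ContinuousLinearMap.proj (R := ℝ) (φ := fun _ : Fin n => ℝ)
          l)).hasFDerivAt.comp x ((hv.differentiable (by simp)) x).hasFDerivAt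
      rw [h1.fderiv]
      rfl
    let L : Fin n → TestFn S →ₗ[ℂ] ℂ := fun l => testPair hS _ (hvl l).continuous
    have hL : ∀ l j (φ : TestFn S), ∫ x, φ.1 x * ((fderiv ℝ v x (Pi.single j 1) l : ℝ) : ℂ)
        = - L l (testD hS.isClosed j φ) := by
      intro l j φ
      have := integral_testD_mul hS j φ (hvl l)
      simp only [hfd] at this
      change _ = - ∫ x, (testD hS.isClosed j φ).1 x * (v x l : ℂ)
      rw [this, neg_neg]
    have hsum : ∀ q, ∫ x, (P (b q) η).1 x *
        ((∑ j, ∑ l, a j q l * fderiv ℝ v x (Pi.single j 1) l : ℝ) : ℂ)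
        = - ∑ l, L l (P (b q * (∑ j, MvPolynomial.X j * MvPolynomial.C (a j q l : ℂ))) η) := by
      intro q
      have h1 : (fun x => (P (b q) η).1 x *
          ((∑ j, ∑ l, a j q l * fderiv ℝ v x (Pi.single j 1) l : ℝ) : ℂ))
          = fun x => ∑ j, ∑ l, (a j q l : ℂ) * ((P (b q) η).1 x *
            ((fderiv ℝ v x (Pi.single j 1) l : ℝ) : ℂ)) := by
        ext x
        push_cast
        rw [Finset.mul_sum]
        refine Finset.sum_congr rfl fun j _ => ?_
        rw [Finset.mul_sum]
        exact Finset.sum_congr rfl fun l _ => by ring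
      rw [h1, integral_finsetSum _ fun j _ => integrable_finsetSum _ fun l _ =>
        (hint _ _ (hcd v hv j l)).const_mul _]
      rw [Finset.sum_congr rfl fun j _ => integral_finsetSum _ fun l _ =>
        (hint _ _ (hcd v hv j l)).const_mul _]
      rw [Finset.sum_comm, ← Finset.sum_neg_distrib]
      refine Finset.sum_congr rfl fun l _ => ?_
      rw [mul_comm (b q), map_mul, Module.End.mul_apply, map_sum, LinearMap.sum_apply, map_sum,
        ← Finset.sum_neg_distrib]
      refine Finset.sum_congr rfl fun j _ => ?_
      rw [integral_const_mul, hL, map_mul, hP, Module.End.mul_apply,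
        ← MvPolynomial.algebraMap_eq, AlgHom.commutes, Module.algebraMap_end_apply, map_smul,
        map_smul, smul_eq_mul]
      ring
    rw [Finset.sum_congr rfl fun q _ => hsum q, Finset.sum_neg_distrib, neg_neg, Finset.sum_comm]
    simp only [← map_sum, ← LinearMap.sum_apply, hb]
    rw [Finset.sum_eq_single i]
    · simp only [if_true]
      rfl
    · intro l _ hl
      simp [hl]
    · simp
  | zero => exact ⟨0, fun v _ => by simp⟩
  | add w₁ w₂ _ _ ih1 ih2 =>
    obtain ⟨ψ₁, h1⟩ := ih1
    obtain ⟨ψ₂, h2⟩ := ih2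
    refine ⟨ψ₁ + ψ₂, fun v hv => ?_⟩
    have hvi : Continuous fun x => (v x i : ℂ) :=
      Complex.continuous_ofReal.comp ((continuous_apply i).comp hv.continuous)
    have e1 := (testPair hS _ hvi).map_add w₁ w₂
    simp only [testPair_apply] at e1
    rw [e1, h1 v hv, h2 v hv, ← neg_add, ← Finset.sum_add_distrib]
    refine congrArg Neg.neg (Finset.sum_congr rfl fun q _ => ?_)
    exact ((testPair hS _ (hcf v hv q)).map_add (ψ₁ q) (ψ₂ q)).symm
  | smul c w _ ih =>
    obtain ⟨ψ, h1⟩ := ih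
    refine ⟨c • ψ, fun v hv => ?_⟩
    have hvi : Continuous fun x => (v x i : ℂ) :=
      Complex.continuous_ofReal.comp ((continuous_apply i).comp hv.continuous)
    have e1 := (testPair hS _ hvi).map_smul c w
    change ∫ x, (c • w).1 x * (v x i : ℂ) = c * ∫ x, w.1 x * (v x i : ℂ) at e1
    rw [e1, h1 v hv, mul_neg, Finset.mul_sum]
    refine congrArg Neg.neg (Finset.sum_congr rfl fun q _ => ?_)
    exact ((testPair hS _ (hcf v hv q)).map_smul c (ψ q)).symm
end

/-! ### A pointwise bound by averaging over rays -/

section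
variable {n : ℕ} {S : Set (Fin n → ℝ)}

/-- The component `q` of the first order operator with coefficients `a`: the `q`-th entry of `𝔸v(x)` is
`∑ j l, a j q l * ∂ⱼ v_l(x)`. -/
def opA {N : Type*} (a : Fin n → N → Fin n → ℝ) (v : (Fin n → ℝ) → (Fin n → ℝ))
    (x : Fin n → ℝ) (q : N) : ℝ := ∑ j, ∑ l, a j q l * fderiv ℝ v x (Pi.single j 1) l

lemma fderiv_dilation (v : (Fin n → ℝ) → (Fin n → ℝ)) (hv : ContDiff ℝ 1 v) {s : ℝ} (hs : s ≠ 0)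
    (y : Fin n → ℝ) : fderiv ℝ (fun y => s⁻¹ • v (s • y)) y = fderiv ℝ v (s • y) := by
  have h1 : HasFDerivAt (fun y : Fin n → ℝ => s • y) (s • ContinuousLinearMap.id ℝ (Fin n → ℝ)) y :=
    (hasFDerivAt_id y).const_smul s
  have h2 := (((hv.differentiable (by simp)) (s • y)).hasFDerivAt.comp y h1).const_smul s⁻¹
  have h3 : HasFDerivAt (fun y => s⁻¹ • v (s • y)) _ y := h2
  rw [h3.fderiv]
  ext w
  simp [hs]

lemma clm_apply_eq_sum (L : (Fin n → ℝ) →L[ℝ] (Fin n → ℝ)) (y : Fin n → ℝ) :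
    L y = ∑ j, y j • L (Pi.single j 1) := by
  conv_lhs => rw [pi_eq_sum_univ' y]
  rw [map_sum]
  refine Finset.sum_congr rfl fun j _ => ?_
  rw [map_smul]

/-- With `T ρ` dual to the operator as in `exists_dual`, the radial derivative of `v` at scale `s`,
averaged against `ρ`, is an average of `𝔸v` at scale `s`: integrate by parts for the dilate
`u(y) = s⁻¹ v(sy)`, which has `∇u(y) = ∇v(sy)`. -/
lemma integral_dilation_identity {N : Type*} [Fintype N] (hS : IsCompact S)
    (a : Fin n → N → Fin n → ℝ) (ρ : TestFn S) (i : Fin n) (ψ : N → TestFn S)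
    (hψ : ∀ v : (Fin n → ℝ) → (Fin n → ℝ), ContDiff ℝ 1 v →
      ∫ x, (testT hS.isClosed ρ).1 x * (v x i : ℂ) = - ∑ q, ∫ x, (ψ q).1 x * (opA a v x q : ℂ))
    (v : (Fin n → ℝ) → (Fin n → ℝ)) (hv : ContDiff ℝ 1 v) {s : ℝ} (hs : 0 < s) :
    ∫ y, ρ.1 y * ((fderiv ℝ v (s • y) y i : ℝ) : ℂ)
      = ∑ q, ∫ y, (ψ q).1 y * (opA a v (s • y) q : ℂ) := by
  set u : (Fin n → ℝ) → (Fin n → ℝ) := fun y => s⁻¹ • v (s • y) with hu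
  have hu1 : ContDiff ℝ 1 u := (hv.comp (contDiff_id.const_smul s)).const_smul s⁻¹
  have hud : ∀ y, fderiv ℝ u y = fderiv ℝ v (s • y) := fderiv_dilation v hv hs.ne'
  have hui : ContDiff ℝ 1 fun x => (u x i : ℂ) :=
    Complex.ofRealCLM.contDiff.comp ((contDiff_apply ℝ ℝ i).comp hu1)
  have hfd : ∀ x w, fderiv ℝ (fun x => (u x i : ℂ)) x w = ((fderiv ℝ u x w i : ℝ) : ℂ) := by
    intro x w
    have h1 : HasFDerivAt (fun x => (u x i : ℂ))
        ((Complex.ofRealCLM.comp (ContinuousLinearMap.proj (R := ℝ) (φ := fun _ : Fin n => ℝ) i)).comp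
          (fderiv ℝ u x)) x :=
      (Complex.ofRealCLM.comp (ContinuousLinearMap.proj (R := ℝ) (φ := fun _ : Fin n => ℝ)
        i)).hasFDerivAt.comp x ((hu1.differentiable (by simp)) x).hasFDerivAt
    rw [h1.fderiv]
    rfl
  have h := hψ u hu1
  have hop : ∀ y q, opA a u y q = opA a v (s • y) q := by
    intro y q
    simp only [opA, hud]
  simp only [hop] at h
  rw [← neg_eq_iff_eq_neg] at h
  rw [← h]
  have hT : ∫ x, (testT hS.isClosed ρ).1 x * (u x i : ℂ)
      = ∑ j, ∫ x, (testD hS.isClosed j (testY S j ρ)).1 x * (u x i : ℂ) := by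
    have := map_sum (testPair hS _ hui.continuous) (fun j => testD hS.isClosed j (testY S j ρ))
      Finset.univ
    simp only [testPair_apply] at this
    rw [← this]
    simp [testT]
  rw [hT, ← Finset.sum_neg_distrib]
  simp only [integral_testD_mul hS _ _ hui, neg_neg]
  rw [← integral_finsetSum]
  · congr 1
    ext y
    rw [clm_apply_eq_sum (fderiv ℝ v (s • y)) y]
    simp only [testY_apply, hfd, hud]
    simp only [Finset.sum_apply, Pi.smul_apply, smul_eq_mul]
    push_cast
    rw [Finset.mul_sum]
    exact Finset.sum_congr rfl fun j _ => by ring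
  · intro j _
    exact ((testFn_continuous _).mul
      ((hui.continuous_fderiv (by simp)).clm_apply continuous_const)).integrable_of_hasCompactSupport
        (testFn_hasCompactSupport hS _).mul_right

lemma continuous_opA {N : Type*} (a : Fin n → N → Fin n → ℝ)
    {v : (Fin n → ℝ) → (Fin n → ℝ)} (hv : ContDiff ℝ 1 v) (q : N) :
    Continuous fun x => opA a v x q :=
  continuous_finsetSum _ fun _ _ => continuous_finsetSum _ fun l _ =>
    continuous_const.mul ((continuous_apply l).comp
      ((hv.continuous_fderiv (by simp)).clm_apply continuous_const))

/-- A formula for `vᵢ(0)` in terms of `𝔸v`, obtained by averaging `v(0) = -∫₀^L ∇v(sy) y ds` over `y ∈ S`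
with weight `ρ`. -/
lemma representation_zero {N : Type*} [Fintype N] (hS : IsCompact S) (h0 : (0 : Fin n → ℝ) ∉ S)
    (a : Fin n → N → Fin n → ℝ) (ρ : TestFn S) (hρ : ∫ x, ρ.1 x = 1) (i : Fin n) (ψ : N → TestFn S)
    (hψ : ∀ v : (Fin n → ℝ) → (Fin n → ℝ), ContDiff ℝ 1 v →
      ∫ x, (testT hS.isClosed ρ).1 x * (v x i : ℂ) = - ∑ q, ∫ x, (ψ q).1 x * (opA a v x q : ℂ))
    (v : (Fin n → ℝ) → (Fin n → ℝ)) (hv : ContDiff ℝ 1 v) (hvc : HasCompactSupport v) :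
    ∃ L : ℝ, (v 0 i : ℂ)
      = - ∫ s in Set.Ioc 0 L, ∑ q, ∫ y, (ψ q).1 y * (opA a v (s • y) q : ℂ) := by
  -- beyond `L` the dilates of `S` leave the support
  obtain ⟨m, hm, hmS⟩ : ∃ m > 0, ∀ y ∈ S, m ≤ ‖y‖ := by
    obtain ⟨m, hm, hb⟩ := Metric.isOpen_iff.1 hS.isClosed.isOpen_compl 0 h0
    refine ⟨m, hm, fun y hy => ?_⟩
    by_contra! h
    exact hb (by simpa using h) hy
  obtain ⟨R, hR⟩ := hvc.isCompact.isBounded.exists_norm_le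
  set L : ℝ := (|R| + 1) / m with hL
  have hLpos : 0 < L := by positivity
  have hvL : ∀ y ∈ S, v (L • y) = 0 := by
    intro y hy
    by_contra h
    have h1 := hR _ (subset_tsupport v h)
    rw [norm_smul, Real.norm_of_nonneg hLpos.le] at h1
    have h2 : |R| + 1 ≤ L * ‖y‖ := by
      calc |R| + 1 = L * m := by rw [hL]; field_simp
        _ ≤ L * ‖y‖ := by gcongr; exact hmS y hy
    linarith [le_abs_self R]
  refine ⟨L, ?_⟩
  have hfc : Continuous fun p : (Fin n → ℝ) × ℝ => ((fderiv ℝ v (p.2 • p.1) p.1 i : ℝ) : ℂ) :=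
    Complex.continuous_ofReal.comp ((continuous_apply i).comp
      (((hv.continuous_fderiv (by simp)).comp (continuous_snd.smul continuous_fst)).clm_apply
        continuous_fst))
  have hftc : ∀ y ∈ S, ∫ s in Set.Ioc 0 L, ((fderiv ℝ v (s • y) y i : ℝ) : ℂ) = - (v 0 i : ℂ) := by
    intro y hy
    rw [← intervalIntegral.integral_of_le hLpos.le]
    rw [intervalIntegral.integral_eq_sub_of_hasDerivAt (f := fun s : ℝ => (v (s • y) i : ℂ))]
    · simp [hvL y hy]
    · intro s _
      have h1 : HasDerivAt (fun s : ℝ => s • y) y s := by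
        simpa using (hasDerivAt_id s).smul_const y
      have h2 := ((hv.differentiable (by simp)) (s • y)).hasFDerivAt.comp_hasDerivAt s h1
      exact ((hasDerivAt_pi.1 h2) i).ofReal_comp
    · exact (hfc.comp (continuous_const.prodMk continuous_id)).intervalIntegrable _ _
  have hrestr : ∀ g : (Fin n → ℝ) → ℂ, ∫ y in S, ρ.1 y * g y = ∫ y, ρ.1 y * g y := by
    intro g
    refine setIntegral_eq_integral_of_forall_compl_eq_zero fun y hy => ?_
    have : ρ.1 y = 0 := by
      by_contra h
      exact hy (ρ.2.2 h)
    simp [this]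
  have hswap : ∫ y in S, ∫ s in Set.Ioc 0 L, ρ.1 y * ((fderiv ℝ v (s • y) y i : ℝ) : ℂ)
      = ∫ s in Set.Ioc 0 L, ∫ y in S, ρ.1 y * ((fderiv ℝ v (s • y) y i : ℝ) : ℂ) := by
    refine integral_integral_swap ?_
    rw [Measure.prod_restrict]
    have hc : Continuous (Function.uncurry fun (y : Fin n → ℝ) (s : ℝ) =>
        ρ.1 y * ((fderiv ℝ v (s • y) y i : ℝ) : ℂ)) :=
      ((testFn_continuous ρ).comp continuous_fst).mul hfc
    exact (hc.continuousOn.integrableOn_compact (hS.prod isCompact_Icc)).mono_set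
      (Set.prod_mono le_rfl Set.Ioc_subset_Icc_self)
  have hlhs : ∫ y in S, ∫ s in Set.Ioc 0 L, ρ.1 y * ((fderiv ℝ v (s • y) y i : ℝ) : ℂ)
      = - (v 0 i : ℂ) := by
    rw [setIntegral_congr_fun (g := fun y => ρ.1 y * - (v 0 i : ℂ)) hS.measurableSet]
    · rw [hrestr, integral_mul_const, hρ, one_mul]
    · intro y hy
      simp only
      rw [integral_const_mul, hftc y hy]
  rw [← neg_eq_iff_eq_neg, ← hlhs, hswap]
  refine setIntegral_congr_fun measurableSet_Ioc fun s hs => ?_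
  rw [hrestr]
  exact integral_dilation_identity hS a ρ i ψ hψ v hv hs.1

/-- Control of `v(x)` by the averages of `𝔸v` over the dilates `x + s S`, `s > 0`. -/
lemma pointwise_bound {N : Type*} [Fintype N] (hS : IsCompact S) (hne : (interior S).Nonempty)
    (h0 : (0 : Fin n → ℝ) ∉ S) (a : Fin n → N → Fin n → ℝ) (k : ℕ)
    (hk : ∀ p ∈ (Ideal.span (Set.range
        (MvPolynomial.X : Fin n → MvPolynomial (Fin n) ℂ))) ^ k,
      ∀ i, ∃ b : N → MvPolynomial (Fin n) ℂ, ∀ l,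
        ∑ q, b q * (∑ j, MvPolynomial.X j * MvPolynomial.C (a j q l : ℂ)) = if l = i then p else 0)
    (i : Fin n) :
    ∃ C : NNReal, ∀ v : (Fin n → ℝ) → (Fin n → ℝ), ContDiff ℝ 1 v → HasCompactSupport v →
      ∀ x, ‖v x i‖ₑ ≤ C * ∫⁻ s in Set.Ioi (0 : ℝ), ∫⁻ y in S, ∑ q, ‖opA a v (x + s • y) q‖ₑ := by
  obtain ⟨ρ, hρ, hmem⟩ := exists_test_with_derivSpan hS hne k
  obtain ⟨ψ, hψ⟩ := exists_dual hS a (k + 1) (fun p hp => hk p (Ideal.pow_le_pow_right k.le_succ hp))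
    _ hmem i
  have hbd : ∀ q, ∃ M : NNReal, ∀ y, ‖(ψ q).1 y‖ₑ ≤ M := by
    intro q
    obtain ⟨M, hM⟩ := (testFn_hasCompactSupport hS (ψ q)).exists_bound_of_continuous
      (testFn_continuous (ψ q))
    exact ⟨M.toNNReal, fun y => by
      rw [← ofReal_norm]
      exact ENNReal.ofReal_le_ofReal (hM y)⟩
  choose M hM using hbd
  refine ⟨∑ q, M q, fun v hv hvc x => ?_⟩
  set u : (Fin n → ℝ) → (Fin n → ℝ) := fun y => v (x + y) with hu
  have hu1 : ContDiff ℝ 1 u := hv.comp (contDiff_const.add contDiff_id)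
  have huc : HasCompactSupport u := hvc.comp_homeomorph (Homeomorph.addLeft x)
  have hop : ∀ y q, opA a u y q = opA a v (x + y) q := by
    intro y q
    simp only [opA, hu, fderiv_comp_add_left]
  obtain ⟨L, hL⟩ := representation_zero hS h0 a ρ hρ i ψ hψ u hu1 huc
  have h1 : ‖v x i‖ₑ = ‖(u 0 i : ℂ)‖ₑ := by
    simp [hu, enorm_eq_nnnorm]
  rw [h1, hL, enorm_neg]
  calc ‖∫ s in Set.Ioc 0 L, ∑ q, ∫ y, (ψ q).1 y * (opA a u (s • y) q : ℂ)‖ₑ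
      ≤ ∫⁻ s in Set.Ioc 0 L, ‖∑ q, ∫ y, (ψ q).1 y * (opA a u (s • y) q : ℂ)‖ₑ :=
        enorm_integral_le_lintegral_enorm _
    _ ≤ ∫⁻ s in Set.Ioi (0 : ℝ), ((∑ q, M q : NNReal) : ENNReal) *
          ∫⁻ y in S, ∑ q, ‖opA a v (x + s • y) q‖ₑ := by
        refine (lintegral_mono_set Set.Ioc_subset_Ioi_self).trans (lintegral_mono fun s => ?_)
        refine (enorm_sum_le _ _).trans ?_
        rw [ENNReal.ofNNReal_finsetSum, Finset.sum_mul]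
        refine Finset.sum_le_sum fun q _ => (enorm_integral_le_lintegral_enorm _).trans ?_
        rw [← lintegral_const_mul' _ _ ENNReal.coe_ne_top, ← lintegral_indicator hS.measurableSet]
        refine lintegral_mono fun y => ?_
        by_cases hy : y ∈ S
        · rw [Set.indicator_of_mem hy, enorm_mul, hop]
          refine mul_le_mul' (hM q y) ?_
          have : ‖((opA a v (x + s • y) q : ℝ) : ℂ)‖ₑ = ‖opA a v (x + s • y) q‖ₑ := by
            simp [enorm_eq_nnnorm]
          rw [this]
          exact Finset.single_le_sum (f := fun q => ‖opA a v (x + s • y) q‖ₑ)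
            (fun _ _ => zero_le) (Finset.mem_univ q)
        · have : (ψ q).1 y = 0 := by
            by_contra h
            exact hy ((ψ q).2.2 h)
          simp [this, hy]
    _ = _ := lintegral_const_mul' _ _ ENNReal.coe_ne_top
end

open scoped ENNReal

/-! ### The Riesz kernel and cones -/

/-- The Riesz kernel `|w|^{1-n}` for the sup norm, with value `∞` at `w = 0` when `n ≥ 2`. -/
def rieszK {n : ℕ} (w : Fin n → ℝ) : ℝ≥0∞ := (‖w‖ₑ ^ (n - 1))⁻¹

/-- For `σ = ±1`, the closed one-sided cone around `σ eᵢ` where `σ wᵢ ≥ ‖w‖ / 2`, with `‖w‖` the sup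
norm. -/
def cone {n : ℕ} (i : Fin n) (σ : ℝ) : Set (Fin n → ℝ) := {w | ‖w‖ ≤ 2 * (σ * w i)}

section
variable {n : ℕ}

@[fun_prop] lemma measurable_rieszK : Measurable (rieszK : (Fin n → ℝ) → ℝ≥0∞) := by
  unfold rieszK
  fun_prop

lemma measurableSet_cone (i : Fin n) (σ : ℝ) : MeasurableSet (cone i σ) := by
  refine (isClosed_le continuous_norm ?_).measurableSet
  fun_prop

lemma smul_mem_cone {i : Fin n} {σ s : ℝ} (hs : 0 ≤ s) {w : Fin n → ℝ} (hw : w ∈ cone i σ) :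
    s • w ∈ cone i σ := by
  have hw : ‖w‖ ≤ 2 * (σ * w i) := hw
  change ‖s • w‖ ≤ 2 * (σ * (s • w) i)
  rw [norm_smul, Real.norm_of_nonneg hs, Pi.smul_apply, smul_eq_mul]
  nlinarith

lemma closedBall_subset_cone (i : Fin n) {σ : ℝ} (hσ : |σ| = 1) {y : Fin n → ℝ}
    (hy : y ∈ Metric.closedBall (σ • Pi.single i 1 : Fin n → ℝ) (1 / 8)) :
    y ∈ cone i σ ∧ 1 / 2 ≤ ‖y‖ ∧ ‖y‖ ≤ 2 := by
  set e : Fin n → ℝ := σ • Pi.single i 1 with he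
  have hen : ‖e‖ = 1 := by rw [he, norm_smul, Real.norm_eq_abs, hσ, Pi.norm_single]; simp
  have hd : ‖y - e‖ ≤ 1 / 8 := by rwa [mem_closedBall_iff_norm] at hy
  have h1 : |‖y‖ - ‖e‖| ≤ ‖y - e‖ := abs_norm_sub_norm_le y e
  rw [hen, abs_le] at h1
  have h2 : |y i - σ| ≤ 1 / 8 := by
    have := norm_le_pi_norm (y - e) i
    simp only [he, Pi.sub_apply, Pi.smul_apply, Pi.single_eq_same, smul_eq_mul, mul_one,
      Real.norm_eq_abs] at this
    exact this.trans hd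
  have h3 : |σ * y i - 1| ≤ 1 / 8 := by
    have hss : σ * σ = 1 := by rw [← abs_mul_abs_self, hσ, one_mul]
    have : σ * y i - 1 = σ * (y i - σ) := by rw [mul_sub, hss]
    rw [this, abs_mul, hσ, one_mul]
    exact h2
  rw [abs_le] at h3
  refine ⟨?_, by linarith, by linarith⟩
  change ‖y‖ ≤ 2 * (σ * y i)
  linarith

lemma lintegral_comp_smul_vec {s : ℝ} (hs : 0 < s) (g : (Fin n → ℝ) → ℝ≥0∞) (hg : Measurable g) :
    ∫⁻ y, g (s • y) = ENNReal.ofReal ((s ^ n)⁻¹) * ∫⁻ w, g w := by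
  have h := Measure.map_addHaar_smul (volume : Measure (Fin n → ℝ)) hs.ne'
  rw [← lintegral_map hg (measurable_const_smul s), h, lintegral_smul_measure]
  simp [abs_of_pos, hs]

/-- The integral of `s^{-n} ds` over `r / 2 ≤ s ≤ 2 r`, where `r = ‖w‖`, is at most a multiple of `r^{1-n}`.
For `w = 0` the range of integration is empty. -/
lemma lintegral_dilations_le (hn : 1 ≤ n) (w : Fin n → ℝ) :
    ∫⁻ s in Set.Ioi (0 : ℝ), Set.indicator {s : ℝ | s / 2 ≤ ‖w‖ ∧ ‖w‖ ≤ 2 * s}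
      (fun s => ENNReal.ofReal ((s ^ n)⁻¹)) s ≤ ENNReal.ofReal (2 ^ (n + 1)) * rieszK w := by
  rcases eq_or_ne w 0 with rfl | hw
  · refine le_of_eq_of_le ?_ zero_le
    rw [setLIntegral_eq_zero_iff measurableSet_Ioi]
    · refine Filter.Eventually.of_forall fun s hs => ?_
      rw [Set.indicator_of_notMem]
      rintro ⟨h, -⟩
      simp only [norm_zero] at h
      have : 0 < s := hs
      linarith
    · refine Measurable.indicator (by fun_prop) ?_
      rw [Set.ofPred_and]
      refine MeasurableSet.inter (measurableSet_le ?_ ?_) (measurableSet_le ?_ ?_) <;> fun_prop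
  have hr : 0 < ‖w‖ := norm_pos_iff.2 hw
  set r := ‖w‖
  calc _ ≤ ∫⁻ s in Set.Ioi (0 : ℝ), Set.indicator (Set.Icc (r / 2) (2 * r))
          (fun s => ENNReal.ofReal (((r / 2) ^ n)⁻¹)) s := by
        refine lintegral_mono fun s => Set.indicator_apply_le' (fun hs => ?_) fun _ => zero_le
        have h1 : r / 2 ≤ s := by linarith [hs.2]
        rw [Set.indicator_of_mem (show s ∈ Set.Icc (r / 2) (2 * r) from ⟨h1, by linarith [hs.1]⟩)]
        gcongr
    _ ≤ ∫⁻ s, Set.indicator (Set.Icc (r / 2) (2 * r))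
          (fun s => ENNReal.ofReal (((r / 2) ^ n)⁻¹)) s := setLIntegral_le_lintegral _ _
    _ = ENNReal.ofReal (((r / 2) ^ n)⁻¹) * ENNReal.ofReal (2 * r - r / 2) := by
        rw [lintegral_indicator measurableSet_Icc, setLIntegral_const, Real.volume_Icc]
    _ ≤ _ := by
        have : rieszK w = ENNReal.ofReal ((r ^ (n - 1))⁻¹) := by
          rw [rieszK, ← ofReal_norm, ENNReal.ofReal_inv_of_pos (by positivity),
            ENNReal.ofReal_pow hr.le]
        rw [this, ← ENNReal.ofReal_mul (by positivity), ← ENNReal.ofReal_mul (by positivity)]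
        refine ENNReal.ofReal_le_ofReal ?_
        obtain ⟨m, rfl⟩ : ∃ m, n = m + 1 := ⟨n - 1, by omega⟩
        have : ((r / 2) ^ (m + 1))⁻¹ * (2 * r - r / 2) = 3 * 2 ^ m * (r ^ m)⁻¹ := by
          rw [pow_succ, div_pow]
          field_simp
          ring
        rw [this]
        simp only [Nat.add_sub_cancel]
        gcongr
        have : (2:ℝ) ^ (m + 1 + 1) = 4 * 2 ^ m := by ring
        rw [this]
        have : (0:ℝ) < 2 ^ m := by positivity
        linarith

/-- The average over dilates of a small ball around `σ eᵢ` is controlled by the potential with the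
Riesz kernel restricted to a cone: substitute `w = s y` and integrate in `s` first. -/
lemma cone_bound (hn : 1 ≤ n) (i : Fin n) {σ : ℝ} (hσ : |σ| = 1) (h : (Fin n → ℝ) → ℝ≥0∞)
    (hh : Measurable h) (x : Fin n → ℝ) :
    ∫⁻ s in Set.Ioi (0 : ℝ),
        ∫⁻ y in Metric.closedBall (σ • Pi.single i 1 : Fin n → ℝ) (1 / 8), h (x + s • y)
      ≤ ENNReal.ofReal (2 ^ (n + 1)) * ∫⁻ z, (cone i σ).indicator rieszK (z - x) * h z := by
  set D : Set ((Fin n → ℝ) × ℝ) := {p | p.2 / 2 ≤ ‖p.1‖ ∧ ‖p.1‖ ≤ 2 * p.2} with hD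
  have hDm : MeasurableSet D := by
    rw [hD, Set.ofPred_and]
    refine MeasurableSet.inter (measurableSet_le ?_ ?_) (measurableSet_le ?_ ?_) <;> fun_prop
  let G : ℝ → (Fin n → ℝ) → ℝ≥0∞ := fun s w =>
    D.indicator 1 (w, s) * ((cone i σ).indicator 1 w * h (x + w))
  have hGm : Measurable (Function.uncurry G) := by
    refine Measurable.mul ?_ (Measurable.mul ?_ ?_)
    · exact (measurable_one.indicator hDm).comp measurable_swap
    · exact (measurable_one.indicator (measurableSet_cone i σ)).comp measurable_snd
    · exact hh.comp (by fun_prop)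
  calc _ ≤ ∫⁻ s in Set.Ioi (0 : ℝ), ENNReal.ofReal ((s ^ n)⁻¹) * ∫⁻ w, G s w := by
        refine setLIntegral_mono' measurableSet_Ioi fun s hs => ?_
        have hs : 0 < s := hs
        rw [← lintegral_comp_smul_vec hs _ (show Measurable (G s) from hGm.comp measurable_prodMk_left),
          ← lintegral_indicator measurableSet_closedBall]
        refine lintegral_mono fun y => Set.indicator_apply_le' (fun hy => ?_) fun _ => zero_le
        obtain ⟨h1, h2, h3⟩ := closedBall_subset_cone i hσ hy
        have h4 : (s • y, s) ∈ D := by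
          simp only [hD, Set.mem_ofPred_eq, norm_smul, Real.norm_of_nonneg hs.le]
          constructor <;> nlinarith
        simp [G, Set.indicator_of_mem h4, Set.indicator_of_mem (smul_mem_cone hs.le h1)]
    _ = ∫⁻ s in Set.Ioi (0 : ℝ), ∫⁻ w, ENNReal.ofReal ((s ^ n)⁻¹) * G s w := by
        simp_rw [lintegral_const_mul' _ _ ENNReal.ofReal_ne_top]
    _ = ∫⁻ w, ∫⁻ s in Set.Ioi (0 : ℝ), ENNReal.ofReal ((s ^ n)⁻¹) * G s w := by
        refine lintegral_lintegral_swap (Measurable.aemeasurable ?_)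
        exact Measurable.mul (by fun_prop) hGm
    _ ≤ ∫⁻ w, (ENNReal.ofReal (2 ^ (n + 1)) * rieszK w) * ((cone i σ).indicator 1 w * h (x + w)) := by
        refine lintegral_mono fun w => ?_
        refine le_trans ?_ (mul_le_mul_left (lintegral_dilations_le hn w) _)
        rw [← lintegral_mul_const]
        · refine lintegral_mono fun s => ?_
          simp only [G]
          by_cases hs : (w, s) ∈ D
          · have hs' : s ∈ {s : ℝ | s / 2 ≤ ‖w‖ ∧ ‖w‖ ≤ 2 * s} := hs
            rw [Set.indicator_of_mem hs, Set.indicator_of_mem hs', Pi.one_apply, one_mul]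
          · rw [Set.indicator_of_notMem hs]
            simp
        · refine Measurable.indicator (by fun_prop) ?_
          rw [Set.ofPred_and]
          refine MeasurableSet.inter (measurableSet_le ?_ ?_) (measurableSet_le ?_ ?_) <;> fun_prop
    _ = _ := by
        rw [← lintegral_const_mul' _ _ ENNReal.ofReal_ne_top,
          ← lintegral_add_left_eq_self (fun z => _ * (_ * h z)) x]
        refine lintegral_congr fun w => ?_
        rw [add_sub_cancel_left]
        by_cases hw : w ∈ cone i σ
        · simp [hw, mul_assoc]
        · simp [hw]

/-- The Riesz kernel has integral `O(R)` over the ball of radius `R`. Up to constants `|w|^{1-n}` is the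
integral of `s^{-n} ds` over `‖w‖ ≤ s ≤ 2 ‖w‖`; integrating in `w` first, the volume of the ball of radius
`s` cancels `s^{-n}`. -/
lemma lintegral_rieszK_ball (hn : 1 ≤ n) (R : ℝ) :
    ∫⁻ w in Metric.closedBall (0 : Fin n → ℝ) R, rieszK w
      ≤ ENNReal.ofReal (2 ^ (2 * n + 1) * R) := by
  have : Nonempty (Fin n) := ⟨⟨0, hn⟩⟩
  set D : Set ((Fin n → ℝ) × ℝ) := {p | ‖p.1‖ ≤ p.2 ∧ p.2 ≤ 2 * ‖p.1‖} with hD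
  have hDm : MeasurableSet D := by
    rw [hD, Set.ofPred_and]
    refine MeasurableSet.inter (measurableSet_le ?_ ?_) (measurableSet_le ?_ ?_) <;> fun_prop
  have hlow : ∀ w : Fin n → ℝ, w ≠ 0 → w ∈ Metric.closedBall (0 : Fin n → ℝ) R →
      rieszK w ≤ ENNReal.ofReal (2 ^ n) *
        ∫⁻ s in Set.Ioc 0 (2 * R), ENNReal.ofReal ((s ^ n)⁻¹) * D.indicator 1 (w, s) := by
    intro w hw hwR
    have hr : 0 < ‖w‖ := norm_pos_iff.2 hw
    have hrR : ‖w‖ ≤ R := by simpa using hwR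
    set r := ‖w‖ with hrdef
    have hk : rieszK w = ENNReal.ofReal ((r ^ (n - 1))⁻¹) := by
      rw [rieszK, ← ofReal_norm, ENNReal.ofReal_inv_of_pos (by positivity),
        ENNReal.ofReal_pow hr.le]
    calc rieszK w = ENNReal.ofReal (2 ^ n) * (ENNReal.ofReal (((2 * r) ^ n)⁻¹) * ENNReal.ofReal (2 * r - r)) := by
          rw [hk, ← ENNReal.ofReal_mul (by positivity), ← ENNReal.ofReal_mul (by positivity)]
          congr 1
          obtain ⟨m, rfl⟩ : ∃ m, n = m + 1 := ⟨n - 1, by omega⟩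
          simp only [Nat.add_sub_cancel]
          rw [mul_pow, pow_succ r]
          field_simp
          ring
      _ = ENNReal.ofReal (2 ^ n) * ∫⁻ s in Set.Icc r (2 * r), ENNReal.ofReal (((2 * r) ^ n)⁻¹) := by
          rw [setLIntegral_const, Real.volume_Icc]
      _ ≤ ENNReal.ofReal (2 ^ n) * ∫⁻ s in Set.Icc r (2 * r),
            ENNReal.ofReal ((s ^ n)⁻¹) * D.indicator 1 (w, s) := by
          refine mul_le_mul_right (setLIntegral_mono' measurableSet_Icc fun s hs => ?_) _
          have hD1 : (w, s) ∈ D := ⟨hs.1, hs.2⟩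
          rw [Set.indicator_of_mem hD1, Pi.one_apply, mul_one]
          have : 0 < s := hr.trans_le hs.1
          gcongr
          exact hs.2
      _ ≤ _ := by
          refine mul_le_mul_right (lintegral_mono_set fun s hs => ?_) _
          exact ⟨hr.trans_le hs.1, hs.2.trans (by linarith)⟩
  have hne : ∀ᵐ w : Fin n → ℝ, w ≠ 0 := by
    simp [ae_iff]
  calc _ ≤ ∫⁻ w : Fin n → ℝ, ENNReal.ofReal (2 ^ n) *
        ∫⁻ s in Set.Ioc 0 (2 * R), ENNReal.ofReal ((s ^ n)⁻¹) * D.indicator 1 (w, s) := by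
        rw [← lintegral_indicator measurableSet_closedBall]
        refine lintegral_mono_ae (hne.mono fun w hw => Set.indicator_apply_le' (fun hwR => ?_) fun _ => zero_le)
        exact hlow w hw hwR
    _ = ENNReal.ofReal (2 ^ n) * ∫⁻ s in Set.Ioc 0 (2 * R),
        ∫⁻ w : Fin n → ℝ, ENNReal.ofReal ((s ^ n)⁻¹) * D.indicator 1 (w, s) := by
        rw [lintegral_const_mul' _ _ ENNReal.ofReal_ne_top, lintegral_lintegral_swap]
        refine Measurable.aemeasurable ?_
        refine Measurable.mul (by fun_prop) ?_
        exact measurable_one.indicator hDm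
    _ ≤ ENNReal.ofReal (2 ^ n) * ∫⁻ s in Set.Ioc 0 (2 * R), ENNReal.ofReal (2 ^ n) := by
        refine mul_le_mul_right (setLIntegral_mono' measurableSet_Ioc fun s hs => ?_) _
        rw [lintegral_const_mul' _ _ ENNReal.ofReal_ne_top]
        calc _ ≤ ENNReal.ofReal ((s ^ n)⁻¹) *
              ∫⁻ w, (Metric.closedBall (0 : Fin n → ℝ) s).indicator 1 w := by
              refine mul_le_mul_right (lintegral_mono fun w => ?_) _
              refine Set.indicator_apply_le' (fun hw => ?_) fun _ => zero_le
              rw [Set.indicator_of_mem (by simpa using hw.1)]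
              rfl
          _ = ENNReal.ofReal (2 ^ n) := by
              rw [lintegral_indicator_one measurableSet_closedBall,
                Real.volume_pi_closedBall _ hs.1.le, ← ENNReal.ofReal_mul (by have := hs.1; positivity)]
              have := hs.1
              congr 1
              simp only [Fintype.card_fin, mul_pow]
              field_simp
          _ ≤ _ := le_rfl
    _ = _ := by
        rw [setLIntegral_const, Real.volume_Ioc, ← ENNReal.ofReal_mul (by positivity),
          ← ENNReal.ofReal_mul (by positivity)]
        congr 1
        ring
end

/-! ### The energy of a finite measure -/

/-- A distribution function `r ↦ ν (-∞, r]` is at most `τ` on a set of measure at most `τ`: test on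
compact subsets of this set, whose largest point decides. -/
lemma measure_sublevel_distribution (ν : Measure ℝ) [IsFiniteMeasure ν] (τ : ℝ≥0∞) :
    ν {r | ν (Set.Iic r) ≤ τ} ≤ τ := by
  have hmono : Monotone fun r => ν (Set.Iic r) := fun a b hab =>
    measure_mono (Set.Iic_subset_Iic.2 hab)
  have hm : MeasurableSet {r | ν (Set.Iic r) ≤ τ} := hmono.measurable measurableSet_Iic
  rw [hm.measure_eq_iSup_isCompact]
  refine iSup₂_le fun K hK => iSup_le fun hKc => ?_
  rcases K.eq_empty_or_nonempty with rfl | hne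
  · simp
  · obtain ⟨r, hr, hmax⟩ := hKc.exists_isGreatest hne
    exact (measure_mono fun x hx => hmax hx).trans (hK hr)

/-- A positive number `t ≤ M` lies in one of the dyadic intervals `[M 2^{-(k+1)}, M 2^{-k}]`. -/
lemma exists_dyadic {t M : ℝ≥0∞} (ht : t ≠ 0) (htM : t ≤ M) (hM : M ≠ ⊤) :
    ∃ k : ℕ, M * 2⁻¹ ^ (k + 1) ≤ t ∧ t ≤ M * 2⁻¹ ^ k := by
  have h : ∃ k : ℕ, M * 2⁻¹ ^ (k + 1) ≤ t := by
    have h1 : Filter.Tendsto (fun k : ℕ => M * 2⁻¹ ^ k) Filter.atTop (nhds (M * 0)) :=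
      ENNReal.Tendsto.const_mul (ENNReal.tendsto_pow_atTop_nhds_zero_of_lt_one (by simp)) (Or.inr hM)
    rw [mul_zero] at h1
    obtain ⟨k, hk⟩ := ((h1.comp (Filter.tendsto_add_atTop_nat 1)).eventually_lt_const
      (pos_iff_ne_zero.2 ht)).exists
    exact ⟨k, hk.le⟩
  classical
  refine ⟨Nat.find h, Nat.find_spec h, ?_⟩
  rcases hk : Nat.find h with _ | k
  · simpa using htM
  · have := Nat.find_min h (m := k) (by omega)
    exact (not_le.1 this).le

/-- For `q < 1` the negative power `-q` of the distribution function of `ν` is integrable, with a bound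
depending only on `q` and the total mass. If `ν` has no atoms the integral is
`∫₀^M t^{-q} dt`; in general, sum over the dyadic level sets of the distribution function. -/
lemma exists_energy_const {q : ℝ} (hq0 : 0 ≤ q) (hq1 : q < 1) :
    ∃ C : ℝ≥0∞, C ≠ ⊤ ∧ ∀ (ν : Measure ℝ) [IsFiniteMeasure ν],
      ∫⁻ r, ν (Set.Iic r) ^ (-q) ∂ν ≤ C * ν Set.univ ^ (1 - q) := by
  set ρ : ℝ≥0∞ := 2⁻¹ ^ (1 - q) with hρ
  have hρ1 : ρ < 1 := ENNReal.rpow_lt_one (by simp) (by linarith)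
  refine ⟨2 ^ q * (1 - ρ)⁻¹, ?_, fun ν _ => ?_⟩
  · refine ENNReal.mul_ne_top (ENNReal.rpow_ne_top_of_nonneg hq0 (by simp)) ?_
    rw [ENNReal.inv_ne_top]
    exact (tsub_pos_of_lt hρ1).ne'
  set M := ν Set.univ with hM
  rcases eq_or_ne M 0 with h0 | h0
  · have : ν = 0 := Measure.measure_univ_eq_zero.1 h0
    simp [this]
  have hMt : M ≠ ⊤ := measure_ne_top _ _
  have hmono : Monotone fun r => ν (Set.Iic r) := fun a b hab =>
    measure_mono (Set.Iic_subset_Iic.2 hab)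
  have hms : ∀ τ, MeasurableSet {r | ν (Set.Iic r) ≤ τ} := fun τ => hmono.measurable measurableSet_Iic
  have hae : ∀ᵐ r ∂ν, ν (Set.Iic r) ≠ 0 := by
    rw [ae_iff]
    simpa using measure_sublevel_distribution ν 0
  have htwo : ∀ k : ℕ, (2⁻¹ : ℝ≥0∞) ^ k ≠ 0 := fun k => by simp
  have htwo' : ∀ k : ℕ, (2⁻¹ : ℝ≥0∞) ^ k ≠ ⊤ := fun k => by simp
  calc ∫⁻ r, ν (Set.Iic r) ^ (-q) ∂ν
      ≤ ∫⁻ r, ∑' k : ℕ, {r | ν (Set.Iic r) ≤ M * 2⁻¹ ^ k}.indicator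
          (fun _ => (M * 2⁻¹ ^ (k + 1)) ^ (-q)) r ∂ν := by
        refine lintegral_mono_ae (hae.mono fun r hr => ?_)
        obtain ⟨k, h1, h2⟩ := exists_dyadic hr (measure_mono (Set.subset_univ _)) hMt
        refine le_trans ?_ (ENNReal.le_tsum k)
        rw [Set.indicator_of_mem (by exact h2), ENNReal.rpow_neg, ENNReal.rpow_neg,
          ENNReal.inv_le_inv]
        exact ENNReal.rpow_le_rpow h1 hq0
    _ = ∑' k : ℕ, (M * 2⁻¹ ^ (k + 1)) ^ (-q) * ν {r | ν (Set.Iic r) ≤ M * 2⁻¹ ^ k} := by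
        rw [lintegral_tsum fun k => (measurable_const.indicator (hms _)).aemeasurable]
        refine tsum_congr fun k => ?_
        rw [lintegral_indicator_const (hms _)]
    _ ≤ ∑' k : ℕ, (M * 2⁻¹ ^ (k + 1)) ^ (-q) * (M * 2⁻¹ ^ k) :=
        ENNReal.tsum_le_tsum fun k => mul_le_mul_right (measure_sublevel_distribution ν _) _
    _ = ∑' k : ℕ, (2 ^ q * M ^ (1 - q)) * ρ ^ k := by
        refine tsum_congr fun k => ?_
        have hne : M * 2⁻¹ ^ k ≠ 0 := mul_ne_zero h0 (htwo k)
        have hnt : M * 2⁻¹ ^ k ≠ ⊤ := ENNReal.mul_ne_top hMt (htwo' k)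
        rw [pow_succ, ← mul_assoc M, ENNReal.mul_rpow_of_ne_top hnt (by simp), mul_right_comm]
        nth_rewrite 2 [← ENNReal.rpow_one (M * 2⁻¹ ^ k)]
        rw [← ENNReal.rpow_add _ _ hne hnt, ENNReal.mul_rpow_of_ne_top hMt (htwo' k),
          ENNReal.inv_rpow, ← ENNReal.rpow_neg, neg_neg, hρ, neg_add_eq_sub,
          ← ENNReal.rpow_natCast, ← ENNReal.rpow_natCast, ← ENNReal.rpow_mul, ← ENNReal.rpow_mul,
          mul_comm (k : ℝ)]
        ring
    _ = _ := by
        rw [ENNReal.tsum_mul_left, ENNReal.tsum_geometric]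
        ring

/-- `exists_energy_const` for a measure on a metric space, applied to the push-forward under the distance
to `y`. -/
lemma energy_bound {E : Type*} [PseudoMetricSpace E] [MeasurableSpace E] [BorelSpace E]
    {q : ℝ} {C : ℝ≥0∞}
    (hC : ∀ (ν : Measure ℝ) [IsFiniteMeasure ν],
      ∫⁻ r, ν (Set.Iic r) ^ (-q) ∂ν ≤ C * ν Set.univ ^ (1 - q))
    (μ : Measure E) [IsFiniteMeasure μ] (y : E) :
    ∫⁻ z, μ (Metric.closedBall y (dist z y)) ^ (-q) ∂μ ≤ C * μ Set.univ ^ (1 - q) := by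
  have hd : Measurable fun z => dist z y := by fun_prop
  have h := hC (μ.map fun z => dist z y)
  have hmono : Monotone fun r => (μ.map fun z => dist z y) (Set.Iic r) := fun a b hab =>
    measure_mono (Set.Iic_subset_Iic.2 hab)
  rw [lintegral_map (hmono.measurable.pow_const _) hd, Measure.map_apply hd MeasurableSet.univ] at h
  simp only [Measure.map_apply hd measurableSet_Iic, Set.preimage_univ] at h
  exact h

/-! ### Pairs of points in opposite cones -/

section
variable {n : ℕ}

lemma rieszK_le_of_le {r : ℝ} {w : Fin n → ℝ} (h : r ≤ ‖w‖) :
    rieszK w ≤ (ENNReal.ofReal r ^ (n - 1))⁻¹ := by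
  rw [rieszK, ← ofReal_norm]
  gcongr

lemma le_rieszK_of_le {r : ℝ} {w : Fin n → ℝ} (h : ‖w‖ ≤ r) :
    (ENNReal.ofReal r ^ (n - 1))⁻¹ ≤ rieszK w := by
  rw [rieszK, ← ofReal_norm]
  gcongr

/-- If `y` and `z` lie in opposite cones with apex `x`, then `x` is close to both at the scale of
`dist z y`. -/
lemma norm_add_norm_le_of_cone {i : Fin n} {x y z : Fin n → ℝ} (hy : y - x ∈ cone i 1)
    (hz : z - x ∈ cone i (-1)) : ‖y - x‖ + ‖z - x‖ ≤ 2 * dist z y := by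
  have h1 : ‖y - x‖ ≤ 2 * (1 * (y - x) i) := hy
  have h2 : ‖z - x‖ ≤ 2 * (-1 * (z - x) i) := hz
  have h3 : (y - z) i ≤ dist z y := by
    rw [dist_comm, dist_eq_norm]
    exact (Real.le_norm_self _).trans (norm_le_pi_norm (y - z) i)
  simp only [Pi.sub_apply] at h1 h2 h3
  linarith

/-- If `x` is within `2 * dist z y` of `y`, then the mass of the ball around `y` through `z` contributes
to the potential at `x` with kernel at least `(3 * dist z y)^{1-n}`. -/
lemma potential_lower (μ : Measure (Fin n → ℝ)) {x y z : Fin n → ℝ}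
    (h : ‖y - x‖ ≤ 2 * dist z y) :
    (ENNReal.ofReal (3 * dist z y) ^ (n - 1))⁻¹ * μ (Metric.closedBall y (dist z y))
      ≤ ∫⁻ z', rieszK (z' - x) ∂μ := by
  rw [← setLIntegral_const]
  refine le_trans (setLIntegral_mono' measurableSet_closedBall fun w hw => ?_)
    (setLIntegral_le_lintegral _ _)
  refine le_rieszK_of_le ?_
  have h1 : ‖w - y‖ ≤ dist z y := by rwa [mem_closedBall_iff_norm] at hw
  calc ‖w - x‖ ≤ ‖w - y‖ + ‖y - x‖ := norm_sub_le_norm_sub_add_norm_sub w y x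
    _ ≤ _ := by linarith

lemma lintegral_rieszK_shift (hn : 1 ≤ n) (y : Fin n → ℝ) (R : ℝ) :
    ∫⁻ x, {x | ‖y - x‖ ≤ R}.indicator (fun x => rieszK (y - x)) x
      ≤ ENNReal.ofReal (2 ^ (2 * n + 1) * R) := by
  refine le_trans (le_of_eq ?_) (lintegral_rieszK_ball hn R)
  rw [← lintegral_indicator measurableSet_closedBall,
    ← lintegral_sub_left_eq_self ((Metric.closedBall (0 : Fin n → ℝ) R).indicator rieszK) y]
  refine lintegral_congr fun x => ?_
  by_cases hx : ‖y - x‖ ≤ R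
  · rw [Set.indicator_of_mem (by exact hx), Set.indicator_of_mem (by simpa using hx)]
  · rw [Set.indicator_of_notMem (by exact hx), Set.indicator_of_notMem (by simpa using hx)]

/-- The product of the Riesz kernels at `y` and `z` has integral `O((dist z y)^{2-n})` over the points
`x` with `‖y - x‖ + ‖z - x‖ ≤ 2 * dist z y`: at each `x` one of the kernels is at most
`(dist z y / 2)^{1-n}`, and the other one is integrated over a ball. -/
lemma lintegral_two_rieszK (hn : 1 ≤ n) {y z : Fin n → ℝ} (hyz : z ≠ y) :
    ∫⁻ x, {x | ‖y - x‖ + ‖z - x‖ ≤ 2 * dist z y}.indicator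
        (fun x => rieszK (y - x) * rieszK (z - x)) x
      ≤ (ENNReal.ofReal (dist z y / 2) ^ (n - 1))⁻¹ *
        (ENNReal.ofReal (2 ^ (2 * n + 1) * (2 * dist z y)) +
          ENNReal.ofReal (2 ^ (2 * n + 1) * (2 * dist z y))) := by
  set R := dist z y with hR
  have hRpos : 0 < R := dist_pos.2 hyz
  have hm : ∀ y : Fin n → ℝ,
      Measurable ({x | ‖y - x‖ ≤ 2 * R}.indicator (fun x => rieszK (y - x))) := fun y =>
    Measurable.indicator (by fun_prop) (measurableSet_le (by fun_prop) (by fun_prop))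
  calc _ ≤ ∫⁻ x, (ENNReal.ofReal (R / 2) ^ (n - 1))⁻¹ *
        ({x | ‖y - x‖ ≤ 2 * R}.indicator (fun x => rieszK (y - x)) x +
          {x | ‖z - x‖ ≤ 2 * R}.indicator (fun x => rieszK (z - x)) x) := by
        refine lintegral_mono fun x => Set.indicator_apply_le' (fun hx => ?_) fun _ => zero_le
        have hx : ‖y - x‖ + ‖z - x‖ ≤ 2 * R := hx
        have h1 : ‖y - x‖ ≤ 2 * R := by linarith [norm_nonneg (z - x)]
        have h2 : ‖z - x‖ ≤ 2 * R := by linarith [norm_nonneg (y - x)]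
        rw [Set.indicator_of_mem (by exact h1), Set.indicator_of_mem (by exact h2)]
        have h3 : R ≤ ‖z - x‖ + ‖y - x‖ := by
          rw [hR, dist_eq_norm, norm_sub_rev y x]
          exact norm_sub_le_norm_sub_add_norm_sub z x y
        rcases le_total (R / 2) ‖z - x‖ with h | h
        · rw [mul_comm]
          exact mul_le_mul' (rieszK_le_of_le h) le_self_add
        · exact mul_le_mul' (rieszK_le_of_le (by linarith)) le_add_self
    _ = (ENNReal.ofReal (R / 2) ^ (n - 1))⁻¹ *
        ((∫⁻ x, {x | ‖y - x‖ ≤ 2 * R}.indicator (fun x => rieszK (y - x)) x) +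
          ∫⁻ x, {x | ‖z - x‖ ≤ 2 * R}.indicator (fun x => rieszK (z - x)) x) := by
        rw [← lintegral_add_left (hm y)]
        exact lintegral_const_mul _ ((hm y).add (hm z))
    _ ≤ _ := mul_le_mul_right (add_le_add (lintegral_rieszK_shift hn y _)
        (lintegral_rieszK_shift hn z _)) _

/-- The pair estimate for opposite cones. The `x`-integral of the two kernels is `O((dist z y)^{2-n})`,
and the lower bound for the full potential, raised to the power `-q` with `q = (n - 2) / (n - 1)`,
brings in `(dist z y)^{n-2}`, so that only the measure of the ball remains. -/
lemma lintegral_cone_pair_le (hn : 2 ≤ n) (μ : Measure (Fin n → ℝ)) [IsFiniteMeasure μ]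
    (i : Fin n) {y z : Fin n → ℝ} (hyz : z ≠ y) :
    ∫⁻ x, (cone i 1).indicator rieszK (y - x) * (cone i (-1)).indicator rieszK (z - x) *
        (∫⁻ z', rieszK (z' - x) ∂μ) ^ (-(((n : ℝ) - 2) / (n - 1)))
      ≤ ENNReal.ofReal (3 ^ (n - 2) * 2 ^ (3 * n + 2)) *
        μ (Metric.closedBall y (dist z y)) ^ (-(((n : ℝ) - 2) / (n - 1))) := by
  set q : ℝ := ((n : ℝ) - 2) / (n - 1) with hq
  have hn' : (2 : ℝ) ≤ n := by exact_mod_cast hn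
  have hq0 : 0 ≤ q := div_nonneg (by linarith) (by linarith)
  set R := dist z y with hR
  have hRpos : 0 < R := dist_pos.2 hyz
  set m := μ (Metric.closedBall y R) with hm
  have hA : (ENNReal.ofReal (3 * R) ^ (n - 1)) ^ q = ENNReal.ofReal ((3 * R) ^ (n - 2)) := by
    rw [← ENNReal.rpow_natCast, ← ENNReal.rpow_mul, ENNReal.ofReal_pow (by positivity),
      ← ENNReal.rpow_natCast]
    congr 1
    rw [hq, Nat.cast_sub (by omega), Nat.cast_sub (by omega)]
    have : (n : ℝ) - 1 ≠ 0 := by linarith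
    push_cast
    field_simp
  have hFq : ∀ x, ‖y - x‖ ≤ 2 * R → (∫⁻ z', rieszK (z' - x) ∂μ) ^ (-q)
      ≤ ENNReal.ofReal ((3 * R) ^ (n - 2)) * m ^ (-q) := by
    intro x hx
    have h1 := potential_lower μ hx
    rw [← hR, ← hm] at h1
    calc _ ≤ ((ENNReal.ofReal (3 * R) ^ (n - 1))⁻¹ * m) ^ (-q) := by
          rw [ENNReal.rpow_neg, ENNReal.rpow_neg, ENNReal.inv_le_inv]
          exact ENNReal.rpow_le_rpow h1 hq0
      _ = _ := by
          rw [ENNReal.mul_rpow_of_ne_top _ (measure_ne_top _ _), ENNReal.inv_rpow,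
            ENNReal.rpow_neg, inv_inv, hA]
          rw [ENNReal.inv_ne_top]
          exact pow_ne_zero _ (by simpa using hRpos)
  calc _ ≤ ∫⁻ x, (ENNReal.ofReal ((3 * R) ^ (n - 2)) * m ^ (-q)) *
        {x | ‖y - x‖ + ‖z - x‖ ≤ 2 * dist z y}.indicator
          (fun x => rieszK (y - x) * rieszK (z - x)) x := by
        refine lintegral_mono fun x => ?_
        by_cases hy : y - x ∈ cone i 1
        · by_cases hz : z - x ∈ cone i (-1)
          · have h := norm_add_norm_le_of_cone hy hz
            rw [Set.indicator_of_mem hy, Set.indicator_of_mem hz,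
              Set.indicator_of_mem (by exact h), mul_comm]
            exact mul_le_mul_left (hFq x (by linarith [norm_nonneg (z - x)])) _
          · simp [hz]
        · simp [hy]
    _ = (ENNReal.ofReal ((3 * R) ^ (n - 2)) * m ^ (-q)) *
        ∫⁻ x, {x | ‖y - x‖ + ‖z - x‖ ≤ 2 * dist z y}.indicator
          (fun x => rieszK (y - x) * rieszK (z - x)) x := by
        refine lintegral_const_mul _ (Measurable.indicator (by fun_prop) ?_)
        exact measurableSet_le (by fun_prop) (by fun_prop)
    _ ≤ (ENNReal.ofReal ((3 * R) ^ (n - 2)) * m ^ (-q)) *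
        ENNReal.ofReal (((R / 2) ^ (n - 1))⁻¹ * (2 * (2 ^ (2 * n + 1) * (2 * R)))) := by
        refine mul_le_mul_right ((lintegral_two_rieszK (by omega) hyz).trans_eq ?_) _
        rw [← ENNReal.ofReal_add (by positivity) (by positivity),
          ENNReal.ofReal_mul (by positivity), ENNReal.ofReal_inv_of_pos (by positivity),
          ENNReal.ofReal_pow (by positivity), ← hR]
        congr 2
        ring
    _ = _ := by
        rw [mul_right_comm, ← ENNReal.ofReal_mul (by positivity)]
        congr 2
        obtain ⟨k, rfl⟩ : ∃ k, n = k + 2 := ⟨n - 2, by omega⟩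
        have : k + 2 - 1 = k + 1 := by omega
        rw [this, Nat.add_sub_cancel, mul_pow, div_pow]
        field_simp
        ring
end

/-! ### Potentials -/

section
variable {n : ℕ}

/-- The Riesz potential `∫ |z - x|^{1-n} dμ(z)`. -/
def fullPot (μ : Measure (Fin n → ℝ)) (x : Fin n → ℝ) : ℝ≥0∞ := ∫⁻ z, rieszK (z - x) ∂μ

/-- The part of the Riesz potential at `x` coming from the cone with apex `x` around `σ eᵢ`. -/
def conePot (μ : Measure (Fin n → ℝ)) (i : Fin n) (σ : ℝ) (x : Fin n → ℝ) : ℝ≥0∞ :=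
  ∫⁻ z, (cone i σ).indicator rieszK (z - x) ∂μ

lemma measurable_coneK (i : Fin n) (σ : ℝ) : Measurable ((cone i σ).indicator rieszK) :=
  measurable_rieszK.indicator (measurableSet_cone i σ)

lemma measurable_fullPot (μ : Measure (Fin n → ℝ)) [SFinite μ] : Measurable (fullPot μ) := by
  unfold fullPot
  exact Measurable.lintegral_prod_right' (f := fun p : (Fin n → ℝ) × (Fin n → ℝ) =>
    rieszK (p.2 - p.1)) (by fun_prop)

lemma measurable_conePot (μ : Measure (Fin n → ℝ)) [SFinite μ] (i : Fin n) (σ : ℝ) :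
    Measurable (conePot μ i σ) := by
  unfold conePot
  exact Measurable.lintegral_prod_right' (f := fun p : (Fin n → ℝ) × (Fin n → ℝ) =>
    (cone i σ).indicator rieszK (p.2 - p.1)) ((measurable_coneK i σ).comp (by fun_prop))

lemma conePot_le_fullPot (μ : Measure (Fin n → ℝ)) (i : Fin n) (σ : ℝ) (x : Fin n → ℝ) :
    conePot μ i σ x ≤ fullPot μ x :=
  lintegral_mono fun _ => Set.indicator_le_self _ _ _

/-- The cones cover space: `w` lies in a cone around `± eᵢ` when `|w i|` is the largest coordinate. -/
lemma fullPot_le_sum_conePot (hn : 1 ≤ n) (μ : Measure (Fin n → ℝ)) (x : Fin n → ℝ) :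
    fullPot μ x ≤ ∑ i, (conePot μ i 1 x + conePot μ i (-1) x) := by
  have : Nonempty (Fin n) := ⟨⟨0, hn⟩⟩
  have hm : ∀ i σ, Measurable fun z : Fin n → ℝ => (cone i σ).indicator rieszK (z - x) :=
    fun i σ => (measurable_coneK i σ).comp (by fun_prop)
  have h : ∀ w : Fin n → ℝ, rieszK w ≤
      ∑ i, ((cone i 1).indicator rieszK w + (cone i (-1)).indicator rieszK w) := by
    intro w
    obtain ⟨i, hi⟩ := Finite.exists_max fun i => |w i|
    have hw : ‖w‖ ≤ |w i| := (pi_norm_le_iff_of_nonneg (abs_nonneg _)).2 hi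
    refine le_trans ?_ (Finset.single_le_sum (f := fun i =>
      (cone i 1).indicator rieszK w + (cone i (-1)).indicator rieszK w)
      (fun _ _ => zero_le) (Finset.mem_univ i))
    rcases le_total 0 (w i) with h0 | h0
    · rw [abs_of_nonneg h0] at hw
      have : w ∈ cone i 1 := by
        change ‖w‖ ≤ 2 * (1 * w i)
        linarith
      simp only [Set.indicator_of_mem this]
      exact le_self_add
    · rw [abs_of_nonpos h0] at hw
      have : w ∈ cone i (-1) := by
        change ‖w‖ ≤ 2 * (-1 * w i)
        linarith
      simp only [Set.indicator_of_mem this]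
      exact le_add_self
  calc fullPot μ x ≤ ∫⁻ z, ∑ i, ((cone i 1).indicator rieszK (z - x) +
        (cone i (-1)).indicator rieszK (z - x)) ∂μ := lintegral_mono fun z => h _
    _ = _ := by
      refine (lintegral_finsetSum _ fun i _ => (hm i 1).add (hm i (-1))).trans ?_
      exact Finset.sum_congr rfl fun i _ => lintegral_add_left (hm i 1) _

lemma fullPot_lt_top (hn : 1 ≤ n) {h : (Fin n → ℝ) → ℝ≥0∞} (hh : Measurable h) {B : ℝ≥0∞}
    (hB : B ≠ ⊤) (hhB : ∀ z, h z ≤ B) {R : ℝ} (hR : ∀ z, R < ‖z‖ → h z = 0) (x : Fin n → ℝ) :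
    fullPot (volume.withDensity h) x < ⊤ := by
  rw [fullPot, lintegral_withDensity_eq_lintegral_mul _ hh (by fun_prop)]
  calc _ ≤ ∫⁻ z, B * {z | ‖x - z‖ ≤ ‖x‖ + R}.indicator (fun z => rieszK (x - z)) z := by
        refine lintegral_mono fun z => ?_
        by_cases hz : ‖x - z‖ ≤ ‖x‖ + R
        · rw [Set.indicator_of_mem (by exact hz), rieszK, ← ofReal_norm, norm_sub_rev x z, ofReal_norm]
          exact mul_le_mul_left (hhB z) _
        · have : h z = 0 := hR z (by linarith [norm_sub_le x z])
          simp [this]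
    _ = B * ∫⁻ z, {z | ‖x - z‖ ≤ ‖x‖ + R}.indicator (fun z => rieszK (x - z)) z :=
        lintegral_const_mul' _ _ hB
    _ < ⊤ := ENNReal.mul_lt_top hB.lt_top
        ((lintegral_rieszK_shift hn x _).trans_lt ENNReal.ofReal_lt_top)

/-- The case of a pair `Q ≤ P` for which `P` is comparable with `F`, from
`Q^{2-q} ≤ P^{1-q} Q = P Q P^{-q}`. The degenerate case `P = 0` forces `Q = 0` and `u = 0`. -/
lemma rpow_le_of_opposite {q : ℝ} (hq0 : 0 ≤ q) (hq1 : q < 1) {P Q F u C N : ℝ≥0∞}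
    (hN0 : N ≠ 0) (hN : N ≠ ⊤) (hP : P ≠ ⊤) (hQP : Q ≤ P) (hFP : F ≤ N * P) (hu : u ≤ C * Q) :
    u ^ (2 - q) ≤ C ^ (2 - q) * N ^ q * (P * Q * F ^ (-q)) := by
  have h2 : 0 ≤ 2 - q := by linarith
  have h1 : 0 < 1 - q := by linarith
  calc u ^ (2 - q) ≤ (C * Q) ^ (2 - q) := ENNReal.rpow_le_rpow hu h2
    _ = C ^ (2 - q) * Q ^ (2 - q) := ENNReal.mul_rpow_of_nonneg _ _ h2
    _ ≤ C ^ (2 - q) * (N ^ q * (P * Q * F ^ (-q))) := by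
      refine mul_le_mul_right ?_ _
      rcases eq_or_ne P 0 with h0 | h0
      · have : Q = 0 := le_antisymm (h0 ▸ hQP) zero_le
        rw [this, ENNReal.zero_rpow_of_pos (by linarith)]
        exact zero_le
      have hPq : P ^ (-q) ≤ N ^ q * F ^ (-q) := by
        calc P ^ (-q) = N ^ q * (N * P) ^ (-q) := by
              rw [ENNReal.mul_rpow_of_ne_top hN hP, ← mul_assoc, ← ENNReal.rpow_add _ _ hN0 hN]
              simp
          _ ≤ N ^ q * F ^ (-q) := by
              refine mul_le_mul_right ?_ _
              rw [ENNReal.rpow_neg, ENNReal.rpow_neg, ENNReal.inv_le_inv]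
              exact ENNReal.rpow_le_rpow hFP hq0
      calc Q ^ (2 - q) = Q * Q ^ (1 - q) := by
            rw [show 2 - q = 1 + (1 - q) by ring,
              ENNReal.rpow_add_of_nonneg _ _ zero_le_one h1.le, ENNReal.rpow_one]
        _ ≤ Q * P ^ (1 - q) := mul_le_mul_right (ENNReal.rpow_le_rpow hQP h1.le) _
        _ = Q * (P * P ^ (-q)) := by
            rw [sub_eq_add_neg, ENNReal.rpow_add _ _ h0 hP, ENNReal.rpow_one]
        _ ≤ Q * (P * (N ^ q * F ^ (-q))) := by gcongr
        _ = _ := by ring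
    _ = _ := by ring

/-- If `F` is comparable with the sum of the `P i + Q i` and `u` is bounded by a multiple of each of the
`P i` and `Q i`, then `u ^ (2 - q)` is bounded by the sum of the `P i Q i F^{-q}`. It suffices to use an
index `i` with `P i + Q i` maximal, and to bound `u` by the smaller one of `P i` and `Q i`. -/
lemma rpow_le_sum_of_opposite {ι : Type*} [Fintype ι] [Nonempty ι] {q : ℝ} (hq0 : 0 ≤ q)
    (hq1 : q < 1) {P Q : ι → ℝ≥0∞} {F u C : ℝ≥0∞} (hF : F ≠ ⊤) (hPF : ∀ i, P i ≤ F)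
    (hQF : ∀ i, Q i ≤ F) (hFs : F ≤ ∑ i, (P i + Q i)) (huP : ∀ i, u ≤ C * P i)
    (huQ : ∀ i, u ≤ C * Q i) :
    u ^ (2 - q) ≤ C ^ (2 - q) * (2 * Fintype.card ι : ℝ≥0∞) ^ q * ∑ i, P i * Q i * F ^ (-q) := by
  obtain ⟨i, hi⟩ := Finite.exists_max fun i => P i + Q i
  have hFi : F ≤ Fintype.card ι * (P i + Q i) := by
    refine hFs.trans ((Finset.sum_le_card_nsmul _ _ _ fun j _ => hi j).trans_eq ?_)
    rw [nsmul_eq_mul, Finset.card_univ]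
  have hN0 : (2 * Fintype.card ι : ℝ≥0∞) ≠ 0 := by simp
  have hN : (2 * Fintype.card ι : ℝ≥0∞) ≠ ⊤ := ENNReal.mul_ne_top (by simp) (by simp)
  refine le_trans ?_ (mul_le_mul_right (Finset.single_le_sum (f := fun i => P i * Q i * F ^ (-q))
    (fun _ _ => zero_le) (Finset.mem_univ i)) _)
  rcases le_total (Q i) (P i) with h | h
  · refine rpow_le_of_opposite hq0 hq1 hN0 hN ((hPF i).trans_lt hF.lt_top).ne h ?_ (huQ i)
    calc F ≤ Fintype.card ι * (P i + P i) := hFi.trans (by gcongr)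
      _ = _ := by ring
  · have := rpow_le_of_opposite hq0 hq1 hN0 hN ((hQF i).trans_lt hF.lt_top).ne h (F := F) (by
      calc F ≤ Fintype.card ι * (Q i + Q i) := hFi.trans (by gcongr)
        _ = _ := by ring) (huP i)
    rwa [mul_comm (Q i)] at this

/-- The bound for `∫ F_{i,+} F_{i,-} F^{-q} dx`: the product of the cone potentials is an integral over
pairs `(y, z)`; for these, apply `lintegral_cone_pair_le` and then the energy bound `hC`. -/
lemma lintegral_conePot_pair_le (hn : 2 ≤ n) {Cq : ℝ≥0∞}
    (hC : ∀ (ν : Measure ℝ) [IsFiniteMeasure ν],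
      ∫⁻ r, ν (Set.Iic r) ^ (-(((n : ℝ) - 2) / (n - 1))) ∂ν
        ≤ Cq * ν Set.univ ^ (1 - ((n : ℝ) - 2) / (n - 1)))
    (μ : Measure (Fin n → ℝ)) [IsFiniteMeasure μ] [NullSingletonClass μ] (i : Fin n) :
    ∫⁻ x, conePot μ i 1 x * conePot μ i (-1) x * fullPot μ x ^ (-(((n : ℝ) - 2) / (n - 1)))
      ≤ ENNReal.ofReal (3 ^ (n - 2) * 2 ^ (3 * n + 2)) *
        (Cq * μ Set.univ ^ (1 - ((n : ℝ) - 2) / (n - 1)) * μ Set.univ) := by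
  set q : ℝ := ((n : ℝ) - 2) / (n - 1) with hq
  have hm : ∀ i σ x, Measurable fun z : Fin n → ℝ => (cone i σ).indicator rieszK (z - x) :=
    fun i σ x => (measurable_coneK i σ).comp (by fun_prop)
  let G : (Fin n → ℝ) → (Fin n → ℝ) × (Fin n → ℝ) → ℝ≥0∞ := fun x p =>
    (cone i 1).indicator rieszK (p.1 - x) * (cone i (-1)).indicator rieszK (p.2 - x) *
      fullPot μ x ^ (-q)
  have hG : Measurable (Function.uncurry G) := by
    refine Measurable.mul (Measurable.mul ?_ ?_) ?_
    · exact (measurable_coneK i 1).comp (by fun_prop)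
    · exact (measurable_coneK i (-1)).comp (by fun_prop)
    · exact ((measurable_fullPot μ).pow_const _).comp measurable_fst
  calc _ = ∫⁻ x, ∫⁻ p, G x p ∂(μ.prod μ) := by
        refine lintegral_congr fun x => ?_
        simp only [G]
        rw [lintegral_mul_const, lintegral_prod_mul (f := fun y => (cone i 1).indicator rieszK (y - x))
          (g := fun z => (cone i (-1)).indicator rieszK (z - x)) (hm i 1 x).aemeasurable
          (hm i (-1) x).aemeasurable]
        · rfl
        · exact ((hm i 1 x).comp measurable_fst).mul ((hm i (-1) x).comp measurable_snd)
    _ = ∫⁻ p, (∫⁻ x, G x p) ∂(μ.prod μ) := lintegral_lintegral_swap hG.aemeasurable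
    _ = ∫⁻ y, ∫⁻ z, (∫⁻ x, G x (y, z)) ∂μ ∂μ := by
        refine lintegral_prod _ (Measurable.aemeasurable ?_)
        exact Measurable.lintegral_prod_left' (f := fun p : _ × _ => G p.1 p.2) hG
    _ ≤ ∫⁻ y, ENNReal.ofReal (3 ^ (n - 2) * 2 ^ (3 * n + 2)) *
          (Cq * μ Set.univ ^ (1 - q)) ∂μ := by
        refine lintegral_mono fun y => ?_
        have hne : ∀ᵐ z ∂μ, z ≠ y := by simp [ae_iff]
        refine (lintegral_mono_ae (hne.mono fun z hz => lintegral_cone_pair_le hn μ i hz)).trans ?_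
        rw [lintegral_const_mul' _ _ ENNReal.ofReal_ne_top]
        exact mul_le_mul_right (energy_bound hC μ y) _
    _ = _ := by
        rw [lintegral_const]
        ring

/-- If `u` is bounded by a multiple of each of the one-sided cone potentials of `h dx`, then
`‖u‖_p ≤ C ‖h‖₁` with `p = n / (n - 1)`. The bound and the support of `h` do not enter the constant; they
make the full potential finite, so that negative powers of it are harmless. -/
theorem potential_estimate (hn : 2 ≤ n) (C : ℝ≥0∞) (hC : C ≠ ⊤) :
    ∃ K : ℝ≥0∞, K ≠ ⊤ ∧ ∀ (h u : (Fin n → ℝ) → ℝ≥0∞) (B : ℝ≥0∞) (R : ℝ), Measurable h →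
      ∫⁻ z, h z ≠ ⊤ → B ≠ ⊤ → (∀ z, h z ≤ B) → (∀ z, R < ‖z‖ → h z = 0) →
      (∀ i σ, |σ| = 1 → ∀ x, u x ≤ C * conePot (volume.withDensity h) i σ x) →
      ∫⁻ x, u x ^ ((n : ℝ) / (n - 1)) ≤ K * (∫⁻ z, h z) ^ ((n : ℝ) / (n - 1)) := by
  have : Nonempty (Fin n) := ⟨⟨0, by omega⟩⟩
  have hn' : (2 : ℝ) ≤ n := by exact_mod_cast hn
  have hn1 : (n : ℝ) - 1 ≠ 0 := by linarith
  set q : ℝ := ((n : ℝ) - 2) / (n - 1) with hq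
  have hq0 : 0 ≤ q := div_nonneg (by linarith) (by linarith)
  have hq1 : q < 1 := by
    rw [hq, div_lt_one (by linarith)]
    linarith
  have hp : (n : ℝ) / (n - 1) = 2 - q := by
    rw [hq]
    field_simp
    ring
  rw [hp]
  obtain ⟨Cq, hCq, hCe⟩ := exists_energy_const hq0 hq1
  set K₁ : ℝ≥0∞ := ENNReal.ofReal (3 ^ (n - 2) * 2 ^ (3 * n + 2)) with hK₁
  set K₂ : ℝ≥0∞ := C ^ (2 - q) * (2 * Fintype.card (Fin n) : ℝ≥0∞) ^ q with hK₂
  have hK₂t : K₂ ≠ ⊤ := ENNReal.mul_ne_top (ENNReal.rpow_ne_top_of_nonneg (by linarith) hC)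
    (ENNReal.rpow_ne_top_of_nonneg hq0 (ENNReal.mul_ne_top (by simp) (by simp)))
  refine ⟨K₂ * (n * (K₁ * Cq)), ENNReal.mul_ne_top hK₂t (ENNReal.mul_ne_top (by simp)
    (ENNReal.mul_ne_top ENNReal.ofReal_ne_top hCq)), fun h u B R hh hM hB hhB hR hu => ?_⟩
  set μ := volume.withDensity h with hμ
  have hμuniv : μ Set.univ = ∫⁻ z, h z := by simp [hμ]
  have hfin : IsFiniteMeasure μ := isFiniteMeasure_withDensity hM
  have hna : NullSingletonClass μ := ⟨fun y => withDensity_absolutelyContinuous _ _ (measure_singleton y)⟩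
  calc ∫⁻ x, u x ^ (2 - q)
      ≤ ∫⁻ x, K₂ * ∑ i, conePot μ i 1 x * conePot μ i (-1) x * fullPot μ x ^ (-q) :=
        lintegral_mono fun x => rpow_le_sum_of_opposite hq0 hq1
          (fullPot_lt_top (by omega) hh hB hhB hR x).ne (fun i => conePot_le_fullPot μ i _ x)
          (fun i => conePot_le_fullPot μ i _ x) (fullPot_le_sum_conePot (by omega) μ x)
          (fun i => hu i 1 (by simp) x) (fun i => hu i (-1) (by simp) x)
    _ = K₂ * ∑ i, ∫⁻ x, conePot μ i 1 x * conePot μ i (-1) x * fullPot μ x ^ (-q) := by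
        rw [lintegral_const_mul' _ _ hK₂t, lintegral_finsetSum]
        exact fun i _ => ((measurable_conePot μ i 1).mul (measurable_conePot μ i (-1))).mul
          ((measurable_fullPot μ).pow_const _)
    _ ≤ K₂ * ∑ i : Fin n, K₁ * (Cq * μ Set.univ ^ (1 - q) * μ Set.univ) :=
        mul_le_mul_right (Finset.sum_le_sum fun i _ => lintegral_conePot_pair_le hn hCe μ i) _
    _ = K₂ * (n * (K₁ * Cq)) * (∫⁻ z, h z) ^ (2 - q) := by
        rw [hμuniv, show 2 - q = (1 - q) + 1 by ring,
          ENNReal.rpow_add_of_nonneg _ _ (by linarith) zero_le_one, ENNReal.rpow_one,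
          Finset.sum_const, Finset.card_univ, Fintype.card_fin, nsmul_eq_mul]
        ring
end

/-! ### The operator in coordinates -/

section
variable {n : ℕ}

/-- The coefficients of `𝔸` in the standard basis; the entry `(k, m)` of a matrix is indexed by the pair
`q = (k, m)`. -/
def symbolCoeff (A : Fin n → ((Fin n → ℝ) →ₗ[ℝ] (Fin n → Fin n → ℝ))) (j : Fin n)
    (q : Fin n × Fin n) (l : Fin n) : ℝ := A j (Pi.single l 1) q.1 q.2

lemma apply_eq_sum_symbolCoeff (A : Fin n → ((Fin n → ℝ) →ₗ[ℝ] (Fin n → Fin n → ℝ))) (j : Fin n)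
    (w : Fin n → ℝ) (k m : Fin n) : A j w k m = ∑ l, symbolCoeff A j (k, m) l * w l := by
  conv_lhs => rw [pi_eq_sum_univ' w]
  rw [map_sum, Finset.sum_apply, Finset.sum_apply]
  refine Finset.sum_congr rfl fun l _ => ?_
  rw [map_smul, Pi.smul_apply, Pi.smul_apply, smul_eq_mul, mul_comm]
  rfl

lemma Aop_eq_opA (A : Fin n → ((Fin n → ℝ) →ₗ[ℝ] (Fin n → Fin n → ℝ)))
    (v : (Fin n → ℝ) → (Fin n → ℝ)) (x : Fin n → ℝ) (k m : Fin n) :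
    Aop n A v x k m = opA (symbolCoeff A) v x (k, m) := by
  simp only [Aop, opA, Finset.sum_apply, apply_eq_sum_symbolCoeff]

/-- ℂ-ellipticity in coordinates, with the real and imaginary parts of `w` recombined. -/
lemma symbol_injective_of_cElliptic {A : Fin n → ((Fin n → ℝ) →ₗ[ℝ] (Fin n → Fin n → ℝ))}
    (hA : CElliptic n A) (z : Fin n → ℂ) (hz : z ≠ 0) (w : Fin n → ℂ)
    (h : ∀ q, ∑ i, (∑ j, z j * (symbolCoeff A j q i : ℂ)) * w i = 0) : w = 0 := by
  refine hA z hz w fun k m => ?_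
  rw [← h (k, m)]
  simp only [apply_eq_sum_symbolCoeff, Finset.sum_mul]
  rw [Finset.sum_comm]
  refine Finset.sum_congr rfl fun j _ => ?_
  push_cast
  rw [Finset.mul_sum, ← Finset.sum_add_distrib, Finset.mul_sum]
  refine Finset.sum_congr rfl fun i _ => ?_
  conv_rhs => rw [← Complex.re_add_im (w i)]
  ring

lemma vecNorm_nonneg (v : Fin n → ℝ) : 0 ≤ vecNorm v := Real.sqrt_nonneg _

lemma vecNorm_le_sum (v : Fin n → ℝ) : vecNorm v ≤ ∑ i, |v i| := by
  refine Real.sqrt_le_iff.2 ⟨Finset.sum_nonneg fun _ _ => abs_nonneg _, ?_⟩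
  simpa only [sq_abs] using
    Finset.sum_sq_le_sq_sum_of_nonneg (s := Finset.univ) (f := fun i => |v i|)
      fun _ _ => abs_nonneg _

lemma abs_le_frobNorm (M : Fin n → Fin n → ℝ) (k m : Fin n) : |M k m| ≤ frobNorm M := by
  refine Real.abs_le_sqrt ?_
  refine le_trans ?_ (Finset.single_le_sum (f := fun k => ∑ m, M k m ^ 2)
    (fun _ _ => Finset.sum_nonneg fun _ _ => sq_nonneg _) (Finset.mem_univ k))
  exact Finset.single_le_sum (f := fun m => M k m ^ 2) (fun _ _ => sq_nonneg _) (Finset.mem_univ m)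

lemma opA_eq_zero {N : Type*} (a : Fin n → N → Fin n → ℝ) {v : (Fin n → ℝ) → (Fin n → ℝ)}
    {x : Fin n → ℝ} (hx : x ∉ tsupport v) (q : N) : opA a v x q = 0 := by
  have h : fderiv ℝ v x = 0 := by
    by_contra h
    exact hx (support_fderiv_subset ℝ h)
  simp [opA, h]

/-- The pointwise bound of `|v|` by every cone potential of `|𝔸v| dx`, with one constant for all cones. -/
lemma exists_pointwise_const (hn : 2 ≤ n)
    (A : Fin n → ((Fin n → ℝ) →ₗ[ℝ] (Fin n → Fin n → ℝ))) (hA : CElliptic n A) :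
    ∃ C : ℝ≥0∞, C ≠ ⊤ ∧ ∀ v : (Fin n → ℝ) → (Fin n → ℝ), ContDiff ℝ 1 v → HasCompactSupport v →
      ∀ i σ, |σ| = 1 → ∀ x, ENNReal.ofReal (vecNorm (v x)) ≤
        C * conePot (volume.withDensity fun z => ∑ q, ‖opA (symbolCoeff A) v z q‖ₑ) i σ x := by
  obtain ⟨k, hk⟩ := nullstellensatz_symbol (fun j q l => (symbolCoeff A j q l : ℂ)) (symbol_injective_of_cElliptic hA)
  have key : ∀ (i : Fin n) (b : Bool) (m : Fin n), ∃ C : NNReal,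
      ∀ v : (Fin n → ℝ) → (Fin n → ℝ), ContDiff ℝ 1 v → HasCompactSupport v → ∀ x,
      ‖v x m‖ₑ ≤ C * conePot
        (volume.withDensity fun z => ∑ q, ‖opA (symbolCoeff A) v z q‖ₑ) i (if b then 1 else -1) x := by
    intro i b m
    set σ : ℝ := if b then 1 else -1 with hσdef
    have hσ : |σ| = 1 := by rw [hσdef]; split_ifs <;> simp
    have h0 : (0 : Fin n → ℝ) ∉ Metric.closedBall (σ • Pi.single i 1 : Fin n → ℝ) (1 / 8) := by
      intro h
      have := (closedBall_subset_cone i hσ h).2.1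
      norm_num at this
    have hne : (interior (Metric.closedBall (σ • Pi.single i 1 : Fin n → ℝ) (1 / 8))).Nonempty :=
      ⟨_, Metric.ball_subset_interior_closedBall (Metric.mem_ball_self (by norm_num))⟩
    obtain ⟨C, hC⟩ := pointwise_bound (isCompact_closedBall _ _) hne h0 (symbolCoeff A) k hk m
    refine ⟨C * (2 ^ (n + 1) : ℝ).toNNReal, fun v hv hvc x => (hC v hv hvc x).trans ?_⟩
    have hm : Measurable fun z => ∑ q, ‖opA (symbolCoeff A) v z q‖ₑ :=
      Finset.measurable_fun_sum _ fun q _ => (continuous_opA _ hv q).measurable.enorm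
    have h1 := cone_bound (by omega) i hσ _ hm x
    rw [ENNReal.coe_mul, mul_assoc]
    refine mul_le_mul_right (h1.trans_eq ?_) _
    have hk : Measurable fun z => (cone i σ).indicator rieszK (z - x) :=
      (measurable_coneK i σ).comp (by fun_prop : Measurable fun z => z - x)
    rw [conePot, lintegral_withDensity_eq_lintegral_mul _ hm hk]
    simp only [ENNReal.ofReal, Pi.mul_apply, mul_comm]
  choose C hC using key
  refine ⟨((∑ i, ∑ b, ∑ m, C i b m : NNReal) : ℝ≥0∞), ENNReal.coe_ne_top,
    fun v hv hvc i σ hσ x => ?_⟩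
  obtain ⟨b, rfl⟩ : ∃ b : Bool, σ = if b then 1 else -1 := by
    rcases eq_or_eq_neg_of_abs_eq hσ with h | h
    · exact ⟨true, by simpa using h⟩
    · exact ⟨false, by simpa using h⟩
  calc ENNReal.ofReal (vecNorm (v x)) ≤ ENNReal.ofReal (∑ m, |v x m|) :=
        ENNReal.ofReal_le_ofReal (vecNorm_le_sum _)
    _ = ∑ m, ‖v x m‖ₑ := by
        rw [ENNReal.ofReal_sum_of_nonneg fun _ _ => abs_nonneg _]
        simp only [← ofReal_norm, Real.norm_eq_abs]
    _ ≤ ∑ m, (C i b m : ℝ≥0∞) * conePot (volume.withDensity fun z =>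
          ∑ q, ‖opA (symbolCoeff A) v z q‖ₑ) i (if b then 1 else -1) x := Finset.sum_le_sum fun m _ => hC i b m v hv hvc x
    _ = ((∑ m, C i b m : NNReal) : ℝ≥0∞) * _ := by
        rw [← Finset.sum_mul, ENNReal.ofNNReal_finsetSum]
    _ ≤ _ := by
        refine mul_le_mul_left (ENNReal.coe_le_coe.2 ?_) _
        refine le_trans ?_ (Finset.single_le_sum (f := fun i => ∑ b, ∑ m, C i b m)
          (fun _ _ => zero_le) (Finset.mem_univ i))
        exact Finset.single_le_sum (f := fun b => ∑ m, C i b m)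
          (fun _ _ => zero_le) (Finset.mem_univ b)
end

/-- if `U ⊂ ℝⁿ` is open, bounded and star-shaped with respect to a ball and
`𝔸` is ℂ-elliptic, there is `C > 0` with `‖v‖_{L^{n/(n−1)}(U)} ≤ C ‖𝔸v‖_{L¹(U)}` for all
`v ∈ C¹_c(U; ℝⁿ)`. -/
theorem statement7 (n : ℕ) (hn : 2 ≤ n) (U : Set (Fin n → ℝ))
    (hUo : IsOpen U) (hUb : Bornology.IsBounded U) (hstar : StarShapedWrtBall n U)
    (A : Fin n → ((Fin n → ℝ) →ₗ[ℝ] (Fin n → Fin n → ℝ)))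
    (hsymA : ∀ j w k l, A j w k l = A j w l k)
    (hcross : ∀ i j, A j (Pi.single i 1) = A i (Pi.single j 1))
    (hCell : CElliptic n A) :
    ∃ C : ℝ, 0 < C ∧ ∀ v : (Fin n → ℝ) → (Fin n → ℝ),
      ContDiff ℝ 1 v → HasCompactSupport v → tsupport v ⊆ U →
      (∫ x in U, vecNorm (v x) ^ ((n : ℝ) / ((n : ℝ) - 1))) ^ (((n : ℝ) - 1) / (n : ℝ))
        ≤ C * ∫ x in U, frobNorm (Aop n A v x) := by
  obtain ⟨C₀, hC₀, hpt⟩ := exists_pointwise_const hn A hCell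
  obtain ⟨K, hK, hpot⟩ := potential_estimate hn C₀ hC₀
  have hn' : (2 : ℝ) ≤ n := by exact_mod_cast hn
  set p : ℝ := (n : ℝ) / ((n : ℝ) - 1) with hp
  have hp0 : 0 < p := div_pos (by linarith) (by linarith)
  have hpinv : ((n : ℝ) - 1) / (n : ℝ) = p⁻¹ := (inv_div _ _).symm
  rw [hpinv]
  set K' : ℝ := K.toReal * ((n : ℝ) ^ 2) ^ p with hK'
  have hK'0 : 0 ≤ K' := by positivity
  refine ⟨K' ^ p⁻¹ + 1, by positivity, fun v hv hvc hvU => ?_⟩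
  -- `v` and `𝔸v` vanish off `U`, so both integrals are over the whole space
  have hv0 : ∀ x, x ∉ tsupport v → v x = 0 := fun x hx => image_eq_zero_of_notMem_tsupport hx
  have hA0 : ∀ x, x ∉ tsupport v → frobNorm (Aop n A v x) = 0 := by
    intro x hx
    simp [frobNorm, Aop_eq_opA, opA_eq_zero _ hx]
  have hvn0 : ∀ x, x ∉ tsupport v → vecNorm (v x) ^ p = 0 := by
    intro x hx
    simp [vecNorm, hv0 x hx, hp0.ne']
  rw [setIntegral_eq_integral_of_forall_compl_eq_zero fun x hx => hvn0 x fun h => hx (hvU h),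
    setIntegral_eq_integral_of_forall_compl_eq_zero fun x hx => hA0 x fun h => hx (hvU h)]
  have hvi : Integrable fun x => vecNorm (v x) ^ p := by
    refine Continuous.integrable_of_hasCompactSupport ?_ (hvc.isCompact.of_isClosed_subset
      (isClosed_tsupport _) (closure_minimal (fun x hx => ?_) (isClosed_tsupport v)))
    · have hc := hv.continuous
      refine Continuous.rpow_const ?_ fun _ => Or.inr hp0.le
      unfold vecNorm
      fun_prop
    · by_contra h
      exact hx (hvn0 x h)
  have hAi : Integrable fun x => frobNorm (Aop n A v x) := by
    refine Continuous.integrable_of_hasCompactSupport ?_ (hvc.isCompact.of_isClosed_subset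
      (isClosed_tsupport _) (closure_minimal (fun x hx => ?_) (isClosed_tsupport v)))
    · have hc := continuous_opA (symbolCoeff A) hv
      simp only [frobNorm, Aop_eq_opA]
      fun_prop
    · by_contra h
      exact hx (hA0 x h)
  set I := ∫ x, vecNorm (v x) ^ p with hI
  set J := ∫ x, frobNorm (Aop n A v x) with hJ
  have hI0 : 0 ≤ I := integral_nonneg fun x => Real.rpow_nonneg (vecNorm_nonneg _) _
  have hJ0 : 0 ≤ J := integral_nonneg fun x => Real.sqrt_nonneg _
  set h : (Fin n → ℝ) → ℝ≥0∞ := fun z => ∑ q, ‖opA (symbolCoeff A) v z q‖ₑ with hh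
  have hhm : Measurable h :=
    Finset.measurable_fun_sum _ fun q _ => (continuous_opA _ hv q).measurable.enorm
  have hhle : ∀ z, h z ≤ ENNReal.ofReal (n ^ 2 * frobNorm (Aop n A v z)) := by
    intro z
    have : ∀ q ∈ (Finset.univ : Finset (Fin n × Fin n)), ‖opA (symbolCoeff A) v z q‖ₑ
        ≤ ENNReal.ofReal (frobNorm (Aop n A v z)) := by
      rintro ⟨k, m⟩ -
      rw [← Aop_eq_opA, ← ofReal_norm, Real.norm_eq_abs]
      exact ENNReal.ofReal_le_ofReal (abs_le_frobNorm _ k m)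
    refine (Finset.sum_le_card_nsmul _ _ _ this).trans_eq ?_
    rw [ENNReal.ofReal_mul (by positivity), nsmul_eq_mul]
    simp [sq]
  have hhint : ∫⁻ z, h z ≤ ENNReal.ofReal (n ^ 2 * J) := by
    refine (lintegral_mono hhle).trans_eq ?_
    rw [hJ, ← integral_const_mul, ofReal_integral_eq_lintegral_ofReal (hAi.const_mul _)]
    exact Filter.Eventually.of_forall fun x => mul_nonneg (by positivity) (Real.sqrt_nonneg _)
  -- boundedness of `h`, needed only to see that its potential is finite
  obtain ⟨B, hB⟩ : ∃ B : ℝ, ∀ z, ∑ q, |opA (symbolCoeff A) v z q| ≤ B := by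
    have hcont : Continuous fun z => ∑ q, |opA (symbolCoeff A) v z q| :=
      continuous_finsetSum _ fun q _ => (continuous_opA _ hv q).abs
    obtain ⟨B, hB⟩ := HasCompactSupport.exists_bound_of_continuous
      (hvc.isCompact.of_isClosed_subset (isClosed_tsupport _) (closure_minimal (fun x hx => by
        by_contra h
        exact hx (by simp [opA_eq_zero _ h])) (isClosed_tsupport v))) hcont
    exact ⟨B, fun z => (Real.le_norm_self _).trans (hB z)⟩
  have hhB : ∀ z, h z ≤ ENNReal.ofReal B := by
    intro z
    refine le_trans (le_of_eq ?_) (ENNReal.ofReal_le_ofReal (hB z))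
    rw [ENNReal.ofReal_sum_of_nonneg fun _ _ => abs_nonneg _]
    simp only [hh, ← ofReal_norm, Real.norm_eq_abs]
  obtain ⟨R, hR⟩ := hvc.isCompact.isBounded.exists_norm_le
  have hhR : ∀ z, R < ‖z‖ → h z = 0 := by
    intro z hz
    have : z ∉ tsupport v := fun hzs => (hR z hzs).not_gt hz
    simp [hh, opA_eq_zero _ this]
  have hmain := hpot h (fun x => ENNReal.ofReal (vecNorm (v x))) (ENNReal.ofReal B) R hhm
    (hhint.trans_lt ENNReal.ofReal_lt_top).ne ENNReal.ofReal_ne_top hhB hhR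
    fun i σ hσ x => hpt v hv hvc i σ hσ x
  have hIK : I ≤ K' * J ^ p := by
    rw [← ENNReal.ofReal_le_ofReal_iff (by positivity)]
    calc ENNReal.ofReal I = ∫⁻ x, ENNReal.ofReal (vecNorm (v x)) ^ p := by
          rw [hI, ofReal_integral_eq_lintegral_ofReal hvi
            (Filter.Eventually.of_forall fun x => Real.rpow_nonneg (vecNorm_nonneg _) _)]
          simp only [ENNReal.ofReal_rpow_of_nonneg (vecNorm_nonneg _) hp0.le]
      _ ≤ K * ENNReal.ofReal (n ^ 2 * J) ^ p :=
          hmain.trans (mul_le_mul_right (ENNReal.rpow_le_rpow hhint hp0.le) _)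
      _ = _ := by
          rw [ENNReal.ofReal_rpow_of_nonneg (by positivity) hp0.le,
            Real.mul_rpow (by positivity) hJ0, hK', mul_assoc,
            ENNReal.ofReal_mul (p := K.toReal) (by positivity), ENNReal.ofReal_toReal hK]
  calc I ^ p⁻¹ ≤ (K' * J ^ p) ^ p⁻¹ := Real.rpow_le_rpow hI0 hIK (by positivity)
    _ = K' ^ p⁻¹ * J := by
        rw [Real.mul_rpow hK'0 (by positivity), Real.rpow_rpow_inv hJ0 hp0.ne']
    _ ≤ (K' ^ p⁻¹ + 1) * J := by nlinarith
end
end
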